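/- Let n ≥ 1, let π_n : Cycl_n → Assoc_n be the unique continuous map with π_n ∘ β_n = α_n, and let T ∈ Ψ([n+1]) be a Ψ-tree with exactly ℓ left-most nodes and exactly r right-most nodes. Then for every point x in the open stratum of Assoc_n corresponding to T, the preimage π_n^{-1}(x) ⊆ Cycl_n is homeomorphic to the geometric realization of the poset X_{ℓ,r}. (Proposition 6.1(iii) of the paper, combined with Lemma 3.2.) -/

import Mathlib

/-- The geometric realization of a poset `P` (the realization of the nerve of `P`, i.e. of
the order complex of `P`), modelled concretely as the space of finitely supported
"barycentric coordinate" functions: assignments of nonnegative weights summing to `1`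
whose support is a chain of `P`.  It is topologized as a subspace of `P → ℝ` with the
product topology. -/
def PosetRealization (P : Type*) [Preorder P] : Set (P → ℝ) :=
  {f | (∀ p, 0 ≤ f p) ∧ (Function.support f).Finite ∧ ∑ᶠ p, f p = 1 ∧
      IsChain (· ≤ ·) (Function.support f)}

/-- The map of geometric realizations induced by a map of posets `g : P → Q`
(the realization of the induced simplicial map of nerves): a point with barycentric
coordinates `f` is sent to the point whose weight at `q` is the total weight of the
fiber `g ⁻¹ {q}`. -/
noncomputable def inducedChainMap {P Q : Type*} (g : P → Q) (f : P → ℝ) : Q → ℝ :=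
  fun q => ∑ᶠ p ∈ {p | g p = q}, f p

/-- The three letters `a`, `b`, `(ab)` used to form the words of the poset `X_{ℓ,r}`. -/
inductive XLetter : Type
  | A : XLetter
  | B : XLetter
  | AB : XLetter
deriving DecidableEq

/-- Number of occurrences of the letter `a` contributed by a letter. -/
def XLetter.ca : XLetter → ℕ
  | .A => 1
  | .B => 0
  | .AB => 1

/-- Number of occurrences of the letter `b` contributed by a letter. -/
def XLetter.cb : XLetter → ℕ
  | .A => 0
  | .B => 1
  | .AB => 1

/-- One step of the order relation on words: `XStep x y` holds iff `x` is obtained from `y`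
by replacing one adjacent pair `ab` or `ba` by the single letter `(ab)`. -/
def XStep (x y : List XLetter) : Prop :=
  ∃ u v : List XLetter, x = u ++ [XLetter.AB] ++ v ∧
    (y = u ++ [XLetter.A, XLetter.B] ++ v ∨ y = u ++ [XLetter.B, XLetter.A] ++ v)

/-- The underlying set of the poset `X_{ℓ,r}`: words in the letters `a`, `b`, `(ab)` with
exactly `l` occurrences of `a` and `r` occurrences of `b`. -/
def XWord (l r : ℕ) : Type :=
  {w : List XLetter // (w.map XLetter.ca).sum = l ∧ (w.map XLetter.cb).sum = r}

theorem XStep.length_lt {x y : List XLetter} (h : XStep x y) : x.length < y.length := by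
  obtain ⟨u, v, rfl, (rfl | rfl)⟩ := h <;> simp [List.length_append]

theorem xword_le_length {x y : List XLetter} (h : Relation.ReflTransGen XStep x y) :
    x.length ≤ y.length := by
  induction h with
  | refl => exact le_rfl
  | tail _ h ih => exact ih.trans h.length_lt.le

/-- The partial order on `X_{ℓ,r}`, generated by the replacement steps. -/
instance (l r : ℕ) : PartialOrder (XWord l r) where
  le x y := Relation.ReflTransGen XStep x.1 y.1
  le_refl _ := Relation.ReflTransGen.refl
  le_trans _ _ _ h h' := Relation.ReflTransGen.trans h h'
  le_antisymm x y h h' := by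
    rcases Relation.ReflTransGen.cases_head h with heq | ⟨z, hxz, hzy⟩
    · exact Subtype.ext heq
    · exact absurd ((xword_le_length h').trans_lt
        (hxz.length_lt.trans_le (xword_le_length hzy))) (lt_irrefl _)

/-! ### Ψ-trees, encoded by systems of compatible brackets (partial parenthesizations) -/

/-- A bracket for `Ψ([n])`: an interval `{i, …, j}` of leaves with `i < j ≤ n`,
different from the full interval `{0, …, n}`.  Brackets correspond to internal
vertices (other than the root) of a `Ψ`-tree with leaves `0, 1, …, n`. -/
abbrev PsiBracket (n : ℕ) : Type :=
  {p : ℕ × ℕ // p.1 < p.2 ∧ p.2 ≤ n ∧ ¬(p.1 = 0 ∧ p.2 = n)}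

/-- The set of leaves grouped by a `Ψ`-bracket. -/
def PsiBracket.leaves {n : ℕ} (b : PsiBracket n) : Set ℕ := Set.Icc b.1.1 b.1.2

/-- Two `Ψ`-brackets are compatible when their leaf sets are disjoint or nested. -/
def PsiCompat {n : ℕ} (b c : PsiBracket n) : Prop :=
  Disjoint b.leaves c.leaves ∨ b.leaves ⊆ c.leaves ∨ c.leaves ⊆ b.leaves

/-- The poset `Ψ([n])` of `Ψ`-trees with leaves `0, 1, …, n`, encoded as systems of
pairwise compatible brackets; `T ≤ T'` (i.e. `T' ≥ T`, `T` is obtained from `T'` by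
contracting internal edges) iff the bracket system of `T` is contained in that of `T'`. -/
abbrev Psi (n : ℕ) : Type :=
  {S : Finset (PsiBracket n) // ∀ b ∈ S, ∀ c ∈ S, PsiCompat b c}


/-! ### Fans, encoded by systems of compatible brackets -/

/-- A non-trunk bracket of a fan with leaves `{* = 0, 1, …, n}`: an interval
`{i, …, j}` of leaves with `1 ≤ i < j ≤ n` (not containing the distinguished leaf `*`).
These correspond to internal vertices not lying on the trunk. -/
abbrev FanIntl (n : ℕ) : Type :=
  {p : ℕ × ℕ // 1 ≤ p.1 ∧ p.1 < p.2 ∧ p.2 ≤ n}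

/-- A trunk bracket of a fan with leaves `{* = 0, 1, …, n}`: a pair `(a, b)` with
`0 ≤ a < b ≤ n + 1`, not `(0, n+1)`, grouping the leaves `{*} ∪ {1, …, a} ∪ {b, …, n}`
(the leaves `1, …, a` lying on one side of the trunk and `b, …, n` on the other).
These correspond to internal vertices lying on the trunk (other than the root). -/
abbrev FanTrunk (n : ℕ) : Type :=
  {p : ℕ × ℕ // p.1 < p.2 ∧ p.2 ≤ n + 1 ∧ ¬(p.1 = 0 ∧ p.2 = n + 1)}

/-- A bracket of a fan: either a non-trunk bracket or a trunk bracket. -/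
abbrev FanBracket (n : ℕ) : Type := FanIntl n ⊕ FanTrunk n

/-- The set of leaves grouped by a bracket of a fan (the distinguished leaf `*` is `0`). -/
def FanBracket.leaves {n : ℕ} : FanBracket n → Set ℕ
  | .inl b => Set.Icc b.1.1 b.1.2
  | .inr p => {0} ∪ Set.Icc 1 p.1.1 ∪ Set.Icc p.1.2 n

/-- Compatibility of two brackets of a fan: two non-trunk brackets must have disjoint or
nested leaf sets; two trunk brackets must be nested as trunk brackets (each side of the
trunk separately); a non-trunk bracket `{i, …, j}` and a trunk bracket `(a, b)` must be
either disjoint (`a < i` and `j < b`) or nested on a single side of the trunk (`j ≤ a`,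
or `b ≤ i`). -/
def FanCompat {n : ℕ} : FanBracket n → FanBracket n → Prop
  | .inr p, .inr q => (p.1.1 ≤ q.1.1 ∧ q.1.2 ≤ p.1.2) ∨ (q.1.1 ≤ p.1.1 ∧ p.1.2 ≤ q.1.2)
  | .inl b, .inr p => b.1.2 ≤ p.1.1 ∨ p.1.2 ≤ b.1.1 ∨ (p.1.1 < b.1.1 ∧ b.1.2 < p.1.2)
  | .inr p, .inl b => b.1.2 ≤ p.1.1 ∨ p.1.2 ≤ b.1.1 ∨ (p.1.1 < b.1.1 ∧ b.1.2 < p.1.2)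
  | .inl b, .inl c =>
      Disjoint (FanBracket.leaves (.inl b)) (FanBracket.leaves (.inl c)) ∨
      FanBracket.leaves (.inl b) ⊆ FanBracket.leaves (.inl c) ∨
      FanBracket.leaves (.inl c) ⊆ FanBracket.leaves (.inl b)

/-- The poset `Φ(underline-n)` of fans with leaves `{* = 0, 1, …, n}`, encoded as systems
of pairwise compatible brackets; `T̂ ≤ T̂'` iff `T̂` is obtained from `T̂'` by contracting
non-leaf edges, iff the bracket system of `T̂` is contained in that of `T̂'`. -/
abbrev Fan (n : ℕ) : Type :=
  {S : Finset (FanBracket n) // ∀ x ∈ S, ∀ y ∈ S, FanCompat x y}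

open scoped ENNReal

/-- The open configuration space `Δ^n = {0 < t 1 < … < t n < 1}` of `n` points in `(0,1)`. -/
def openSimplex (n : ℕ) : Set (Fin n → ℝ) :=
  {t | (∀ i j : Fin n, i < j → t i < t j) ∧ (∀ i, 0 < t i) ∧ ∀ i, t i < 1}

/-- Extension of a configuration `t : Fin n → ℝ` by the boundary conventions
`t 0 = 0` and `t (n+1) = 1`, giving a function on `Fin (n+2)`. -/
def ext01 {n : ℕ} (t : Fin n → ℝ) : Fin (n + 2) → ℝ :=
  Fin.cons 0 (Fin.snoc t 1)

/-- Extension of a configuration `t : Fin n → ℝ` by the convention `t 0 = 0` only,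
giving a function on `Fin (n+1)`. -/
def ext0 {n : ℕ} (t : Fin n → ℝ) : Fin (n + 1) → ℝ :=
  Fin.cons 0 t

/-- The index set `T_n` of triples `0 ≤ i < j < k ≤ n+1`. -/
abbrev TriIdx (n : ℕ) : Type :=
  {p : Fin (n + 2) × Fin (n + 2) × Fin (n + 2) // p.1 < p.2.1 ∧ p.2.1 < p.2.2}

/-- The map `α_n : Δ^n → [0,1]^{T_n}`, `s_{ijk} = (t_j − t_i)/(t_k − t_i)`
(with `t_0 = 0`, `t_{n+1} = 1`), whose image's closure is the associahedron. -/
noncomputable def alphaMap (n : ℕ) (t : Fin n → ℝ) : TriIdx n → ℝ := fun q =>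
  (ext01 t q.1.2.1 - ext01 t q.1.1) / (ext01 t q.1.2.2 - ext01 t q.1.1)

/-- The `n`-dimensional associahedron: the closure of `α_n(Δ^n)`. -/
noncomputable def Assoc (n : ℕ) : Set (TriIdx n → ℝ) :=
  closure (alphaMap n '' openSimplex n)

/-- The index set `S_n` of triples of pairwise distinct elements of `{0, 1, …, n}`. -/
abbrev TripleIdx (n : ℕ) : Type :=
  {p : Fin (n + 1) × Fin (n + 1) × Fin (n + 1) // p.1 ≠ p.2.1 ∧ p.1 ≠ p.2.2 ∧ p.2.1 ≠ p.2.2}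

/-- `s̃_{kℓm}(t) = |sin π(t_ℓ − t_k)| / |sin π(t_m − t_k)| ∈ [0, +∞]`
(with the convention `t_0 = 0`). -/
noncomputable def sTilde (n : ℕ) (t : Fin n → ℝ) : TripleIdx n → ℝ≥0∞ := fun q =>
  ENNReal.ofReal |Real.sin (Real.pi * (ext0 t q.1.2.1 - ext0 t q.1.1))| /
    ENNReal.ofReal |Real.sin (Real.pi * (ext0 t q.1.2.2 - ext0 t q.1.1))|

/-- The map `β_n : Δ^n → Δ̄^n × [0,+∞]^{S_n}`. -/
noncomputable def betaMap (n : ℕ) (t : Fin n → ℝ) : (Fin n → ℝ) × (TripleIdx n → ℝ≥0∞) :=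
  (t, sTilde n t)

/-- The `n`-dimensional cyclohedron: the closure of `β_n(Δ^n)`. -/
noncomputable def Cycl (n : ℕ) : Set ((Fin n → ℝ) × (TripleIdx n → ℝ≥0∞)) :=
  closure (betaMap n '' openSimplex n)

/-- Leaves `i` and `j` of the `Ψ`-tree `S` are closer to each other than to the leaf `k`:
the nadir `n(i,j)` lies strictly above the nadir `n(j,k)`, i.e. some internal vertex of
`S` has both `i` and `j` below it but not `k`. -/
def PsiCloser {m : ℕ} (S : Psi m) (i j k : ℕ) : Prop :=
  ∃ b ∈ S.1, i ∈ b.leaves ∧ j ∈ b.leaves ∧ k ∉ b.leaves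

/-- The open stratum of `Assoc_n` corresponding to a `Ψ`-tree `S ∈ Ψ([n+1])`: the points
`x` of `Assoc_n` such that `x_{ijk} = 0` exactly when `i, j` are closer to each other
than to `k`, and `x_{ijk} = 1` exactly when `j, k` are closer to each other than to
`i`. -/
noncomputable def openStratum (n : ℕ) (S : Psi (n + 1)) : Set (TriIdx n → ℝ) :=
  {x | x ∈ Assoc n ∧ ∀ q : TriIdx n,
    (x q = 0 ↔ PsiCloser S q.1.1.1 q.1.2.1.1 q.1.2.2.1) ∧
    (x q = 1 ↔ PsiCloser S q.1.2.1.1 q.1.2.2.1 q.1.1.1)}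

/-! ### The sign matrix of a word -/

/-- The relative position of the `i`-th letter `a` and the `j`-th letter `b` of a word: `1` if the
`a` comes first, `-1` if the `b` comes first, `0` if they belong to the same letter `(ab)`. -/
def wordSign : List XLetter → ℕ → ℕ → SignType
  | [], _, _ => 0
  | .A :: _, 0, _ => 1
  | .A :: w, i + 1, j => wordSign w i j
  | .B :: _, _, 0 => -1
  | .B :: w, i, j + 1 => wordSign w i j
  | .AB :: _, 0, 0 => 0
  | .AB :: _, 0, _ + 1 => 1
  | .AB :: _, _ + 1, 0 => -1
  | .AB :: w, i + 1, j + 1 => wordSign w i j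

/-- The number of letters `a` of a word. -/
def countA (w : List XLetter) : ℕ := (w.map XLetter.ca).sum

/-- The number of letters `b` of a word. -/
def countB (w : List XLetter) : ℕ := (w.map XLetter.cb).sum

@[simp] theorem countA_nil : countA [] = 0 := rfl

@[simp] theorem countB_nil : countB [] = 0 := rfl

@[simp] theorem countA_cons (x : XLetter) (w : List XLetter) :
    countA (x :: w) = x.ca + countA w := by simp [countA]

@[simp] theorem countB_cons (x : XLetter) (w : List XLetter) :
    countB (x :: w) = x.cb + countB w := by simp [countB]

theorem wordSign_row (w : List XLetter) : ∀ {i i' j : ℕ}, i < i' → i' < countA w → j < countB w →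
    wordSign w i j ≠ 1 → wordSign w i' j = -1 := by
  induction w with
  | nil => intro i i' j _ h; simp at h
  | cons x w ih =>
    intro i i' j h1 h2 h3 h4
    obtain ⟨i', rfl⟩ : ∃ k, i' = k + 1 := ⟨i' - 1, by omega⟩
    cases x <;> rcases i with _ | i <;> rcases j with _ | j <;>
      simp_all [wordSign, XLetter.ca, XLetter.cb]
    all_goals first
      | exact ih h1 (by omega) (by omega) h4
      | skip
    · exact ih (Nat.succ_pos _) (by omega) (by omega) h4
    · exact ih (Nat.succ_lt_succ h1) (by omega) (by omega) h4

theorem wordSign_col (w : List XLetter) : ∀ {i j j' : ℕ}, j < j' → i < countA w → j' < countB w →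
    wordSign w i j ≠ -1 → wordSign w i j' = 1 := by
  induction w with
  | nil => intro i i' j _ h; simp at h
  | cons x w ih =>
    intro i j j' h1 h2 h3 h4
    obtain ⟨j', rfl⟩ : ∃ k, j' = k + 1 := ⟨j' - 1, by omega⟩
    cases x <;> rcases i with _ | i <;> rcases j with _ | j <;>
      simp_all [wordSign, XLetter.ca, XLetter.cb]
    all_goals first
      | exact ih h1 (by omega) (by omega) h4
      | skip
    · exact ih (Nat.succ_pos _) (by omega) (by omega) h4
    · exact ih (Nat.succ_lt_succ h1) (by omega) (by omega) h4

theorem eq_replicate_B_of_countA_eq_zero (w : List XLetter) (h : countA w = 0) :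
    w = List.replicate (countB w) .B := by
  induction w with
  | nil => rfl
  | cons x w ih =>
    cases x <;> simp [XLetter.ca] at h
    rw [countB_cons, XLetter.cb, Nat.add_comm, List.replicate_succ, ← ih h]

theorem eq_replicate_A_of_countB_eq_zero (w : List XLetter) (h : countB w = 0) :
    w = List.replicate (countA w) .A := by
  induction w with
  | nil => rfl
  | cons x w ih =>
    cases x <;> simp [XLetter.cb] at h
    rw [countA_cons, XLetter.ca, Nat.add_comm, List.replicate_succ, ← ih h]

theorem exists_wordSign_eq : ∀ (l r : ℕ) (s : ℕ → ℕ → SignType)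
    (_ : ∀ i i' j, i < i' → i' < l → j < r → s i j ≠ 1 → s i' j = -1)
    (_ : ∀ i j j', j < j' → i < l → j' < r → s i j ≠ -1 → s i j' = 1),
    ∃ w, countA w = l ∧ countB w = r ∧ ∀ i < l, ∀ j < r, wordSign w i j = s i j
  | 0, r, s, _, _ => ⟨List.replicate r .B, by simp [countA, XLetter.ca],
    by simp [countB, XLetter.cb], by simp⟩
  | l + 1, 0, s, _, _ =>
    ⟨List.replicate (l + 1) .A, by simp [countA, XLetter.ca], by simp [countB, XLetter.cb], by simp⟩
  | l + 1, r + 1, s, h1, h2 => by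
    rcases hs : s 0 0 with _ | _ | _
    · obtain ⟨w, hA, hB, hw⟩ := exists_wordSign_eq l r (fun i j => s (i + 1) (j + 1))
        (fun i i' j a b c d => h1 _ _ _ (by omega) (by omega) (by omega) d)
        (fun i i' j a b c d => h2 _ _ _ (by omega) (by omega) (by omega) d)
      refine ⟨.AB :: w, by simp [XLetter.ca, hA, add_comm], by simp [XLetter.cb, hB, add_comm], ?_⟩
      rintro (_ | i) hi (_ | j) hj
      · exact hs.symm
      · exact (h2 0 0 (j + 1) (by omega) hi hj (by rw [hs]; decide)).symm
      · exact (h1 0 (i + 1) 0 (by omega) hi hj (by rw [hs]; decide)).symm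
      · exact hw i (by omega) j (by omega)
    · obtain ⟨w, hA, hB, hw⟩ := exists_wordSign_eq (l + 1) r (fun i j => s i (j + 1))
        (fun i i' j a b c d => h1 _ _ _ (by omega) (by omega) (by omega) d)
        (fun i i' j a b c d => h2 _ _ _ (by omega) (by omega) (by omega) d)
      refine ⟨.B :: w, by simp [XLetter.ca, hA], by simp [XLetter.cb, hB, add_comm], ?_⟩
      rintro (_ | i) hi (_ | j) hj
      · exact hs.symm
      · exact hw _ hi j (by omega)
      · exact (h1 0 (i + 1) 0 (by omega) hi hj (by rw [hs]; decide)).symm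
      · exact hw _ hi j (by omega)
    · obtain ⟨w, hA, hB, hw⟩ := exists_wordSign_eq l (r + 1) (fun i j => s (i + 1) j)
        (fun i i' j a b c d => h1 _ _ _ (by omega) (by omega) (by omega) d)
        (fun i i' j a b c d => h2 _ _ _ (by omega) (by omega) (by omega) d)
      refine ⟨.A :: w, by simp [XLetter.ca, hA, add_comm], by simp [XLetter.cb, hB], ?_⟩
      rintro (_ | i) hi (_ | j) hj
      · exact hs.symm
      · exact (h2 0 0 (j + 1) (by omega) hi hj (by rw [hs]; decide)).symm
      · exact hw i (by omega) _ hj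
      · exact hw i (by omega) _ hj
  termination_by l r => l + r

theorem XStep.wordSign_eq {u w : List XLetter} (h : XStep u w) (i j : ℕ)
    (hs : wordSign u i j ≠ 0) : wordSign w i j = wordSign u i j := by
  obtain ⟨p, q, rfl, h⟩ := h
  induction p generalizing w i j with
  | nil =>
    rcases h with rfl | rfl <;> rcases i with _ | i <;> rcases j with _ | j <;>
      simp_all [wordSign]
  | cons x p ih =>
    obtain ⟨v, rfl, hv⟩ : ∃ v, w = x :: v ∧ (v = p ++ [XLetter.A, XLetter.B] ++ q ∨
        v = p ++ [XLetter.B, XLetter.A] ++ q) := by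
      rcases h with rfl | rfl
      · exact ⟨_, rfl, Or.inl rfl⟩
      · exact ⟨_, rfl, Or.inr rfl⟩
    cases x <;> rcases i with _ | i <;> rcases j with _ | j <;> first
      | rfl
      | exact ih _ _ hv hs

theorem wordSign_eq_of_reflTransGen {u w : List XLetter} (h : Relation.ReflTransGen XStep u w)
    (i j : ℕ) (hs : wordSign u i j ≠ 0) : wordSign w i j = wordSign u i j := by
  induction h with
  | refl => rfl
  | tail _ h ih => rw [h.wordSign_eq i j (by rwa [ih]), ih]

theorem XStep.cons {u w : List XLetter} (x : XLetter) (h : XStep u w) :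
    XStep (x :: u) (x :: w) := by
  obtain ⟨p, q, rfl, h⟩ := h
  refine ⟨x :: p, q, rfl, ?_⟩
  rcases h with rfl | rfl
  · exact Or.inl rfl
  · exact Or.inr rfl

theorem reflTransGen_XStep_cons {u w : List XLetter} (x : XLetter)
    (h : Relation.ReflTransGen XStep u w) : Relation.ReflTransGen XStep (x :: u) (x :: w) :=
  Relation.ReflTransGen.lift (x :: ·) (fun _ _ h => XStep.cons x h) _ _ h

theorem reflTransGen_XStep_of_wordSign : ∀ (u w : List XLetter)
    (_ : countA u = countA w) (_ : countB u = countB w)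
    (_ : ∀ i < countA u, ∀ j < countB u, wordSign u i j ≠ 0 → wordSign w i j = wordSign u i j),
    Relation.ReflTransGen XStep u w := by
  intro u w hA hB h
  by_cases hA0 : countA u = 0
  · rw [eq_replicate_B_of_countA_eq_zero u hA0, eq_replicate_B_of_countA_eq_zero w (hA ▸ hA0), hB]
  by_cases hB0 : countB u = 0
  · rw [eq_replicate_A_of_countB_eq_zero u hB0, eq_replicate_A_of_countB_eq_zero w (hB ▸ hB0), hA]
  match u, w with
  | [], _ => simp at hA0
  | _ :: _, [] => exact absurd hA hA0
  | .A :: u, .A :: w =>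
    refine reflTransGen_XStep_cons _ (reflTransGen_XStep_of_wordSign u w ?_ ?_ ?_)
    · simpa [XLetter.ca] using hA
    · simpa [XLetter.cb] using hB
    · exact fun i hi j hj => h (i + 1) (by simp [XLetter.ca] at hi ⊢; omega) j
        (by simpa [XLetter.cb] using hj)
  | .B :: u, .B :: w =>
    refine reflTransGen_XStep_cons _ (reflTransGen_XStep_of_wordSign u w ?_ ?_ ?_)
    · simpa [XLetter.ca] using hA
    · simpa [XLetter.cb] using hB
    · intro i hi j hj
      have := h i (by simpa [XLetter.ca] using hi) (j + 1) (by simp [XLetter.cb] at hj ⊢; omega)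
      simpa only [wordSign] using this
  | .AB :: u, .AB :: w =>
    refine reflTransGen_XStep_cons _ (reflTransGen_XStep_of_wordSign u w ?_ ?_ ?_)
    · simpa [XLetter.ca] using hA
    · simpa [XLetter.cb] using hB
    · exact fun i hi j hj => h (i + 1) (by simp [XLetter.ca] at hi ⊢; omega) (j + 1)
        (by simp [XLetter.cb] at hj ⊢; omega)
  | .AB :: u, .A :: w =>
    refine Relation.ReflTransGen.head ⟨[], u, rfl, Or.inl rfl⟩
      (reflTransGen_XStep_cons _ (reflTransGen_XStep_of_wordSign (.B :: u) w ?_ ?_ ?_))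
    · simpa [XLetter.ca] using hA
    · simpa [XLetter.cb] using hB
    · rintro i hi (_ | j) hj
      · exact h (i + 1) (by simp [XLetter.ca] at hi ⊢; omega) 0 (by simp [XLetter.cb])
      · have := h (i + 1) (by simp [XLetter.ca] at hi ⊢; omega) (j + 1)
          (by simp [XLetter.cb] at hj ⊢; omega)
        simpa only [wordSign] using this
  | .AB :: u, .B :: w =>
    refine Relation.ReflTransGen.head ⟨[], u, rfl, Or.inr rfl⟩
      (reflTransGen_XStep_cons _ (reflTransGen_XStep_of_wordSign (.A :: u) w ?_ ?_ ?_))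
    · simpa [XLetter.ca] using hA
    · simpa [XLetter.cb] using hB
    · rintro (_ | i) hi j hj
      · exact h 0 (by simp [XLetter.ca]) (j + 1) (by simp [XLetter.cb] at hj ⊢; omega)
      · exact h (i + 1) (by simp [XLetter.ca] at hi ⊢; omega) (j + 1)
          (by simp [XLetter.cb] at hj ⊢; omega)
  | .A :: u, .B :: w =>
    have := h 0 (by omega) 0 (by omega)
    simp [wordSign] at this
  | .A :: u, .AB :: w =>
    have := h 0 (by omega) 0 (by omega)
    simp [wordSign] at this
  | .B :: u, .A :: w =>
    have := h 0 (by omega) 0 (by omega)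
    simp [wordSign] at this
  | .B :: u, .AB :: w =>
    have := h 0 (by omega) 0 (by omega)
    simp [wordSign] at this
  termination_by u w => u.length + w.length
  decreasing_by all_goals simp; try omega

/-- The sign matrix of an element of `X_{l,r}`. -/
def XWord.sign {l r : ℕ} (w : XWord l r) (p : Fin l × Fin r) : SignType :=
  wordSign w.1 p.1 p.2

theorem XWord.le_iff_sign {l r : ℕ} {u w : XWord l r} :
    u ≤ w ↔ ∀ p, u.sign p ≠ 0 → w.sign p = u.sign p := by
  constructor
  · exact fun h p hp => wordSign_eq_of_reflTransGen h _ _ hp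
  · intro h
    refine reflTransGen_XStep_of_wordSign _ _ (u.2.1.trans w.2.1.symm) (u.2.2.trans w.2.2.symm) ?_
    intro i hi j hj
    exact h (⟨i, hi.trans_eq u.2.1⟩, ⟨j, hj.trans_eq u.2.2⟩)

theorem XWord.sign_injective {l r : ℕ} : Function.Injective (XWord.sign (l := l) (r := r)) := by
  intro u w h
  exact le_antisymm (XWord.le_iff_sign.2 fun p _ => by rw [h])
    (XWord.le_iff_sign.2 fun p _ => by rw [h])

instance (l r : ℕ) : Finite (XWord l r) := Finite.of_injective _ XWord.sign_injective

/-! ### The geometric realization of `X_{l,r}` as a space of matrices -/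

noncomputable instance (l r : ℕ) : Fintype (XWord l r) := Fintype.ofFinite _

/-- The matrices with entries in `[-T, T]` all of whose entries below an entry `≠ T` are `-T` and
all of whose entries to the right of an entry `≠ -T` are `T`. -/
def staircaseMatrices (l r : ℕ) (T : ℝ) : Set (Fin l × Fin r → ℝ) :=
  {c | (∀ p, |c p| ≤ T) ∧ (∀ i i' j, i < i' → c (i, j) < T → c (i', j) = -T) ∧
    ∀ i j j', j < j' → -T < c (i, j) → c (i, j') = T}

/-- The combination of the sign matrices of words with given weights. -/
noncomputable def signSum {l r : ℕ} (f : XWord l r → ℝ) (p : Fin l × Fin r) : ℝ :=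
  ∑ w, f w * (w.sign p : ℝ)

section
variable {l r : ℕ}

theorem signSum_sub (f g : XWord l r → ℝ) : signSum (f - g) = signSum f - signSum g := by
  ext p; simp [signSum, sub_mul, Finset.sum_sub_distrib]

theorem signSum_add (f g : XWord l r → ℝ) : signSum (f + g) = signSum f + signSum g := by
  ext p; simp [signSum, add_mul, Finset.sum_add_distrib]

open Classical in
theorem signSum_single (w : XWord l r) (e : ℝ) (p : Fin l × Fin r) :
    signSum (Pi.single w e) p = e * (w.sign p : ℝ) := by
  unfold signSum
  rw [Finset.sum_eq_single w]
  · simp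
  · intro u _ hu; simp [Pi.single_eq_of_ne hu]
  · simp

theorem XWord.sign_row (w : XWord l r) {i i' : Fin l} (j : Fin r) (h : i < i')
    (hw : w.sign (i, j) ≠ 1) : w.sign (i', j) = -1 :=
  wordSign_row w.1 h (i'.2.trans_eq w.2.1.symm) (j.2.trans_eq w.2.2.symm) hw

theorem XWord.sign_col (w : XWord l r) (i : Fin l) {j j' : Fin r} (h : j < j')
    (hw : w.sign (i, j) ≠ -1) : w.sign (i, j') = 1 :=
  wordSign_col w.1 h (i.2.trans_eq w.2.1.symm) (j'.2.trans_eq w.2.2.symm) hw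

theorem sign_signSum_of_isGreatest {f : XWord l r → ℝ} (h0 : ∀ w, 0 ≤ f w) {w : XWord l r}
    (hw : IsGreatest (Function.support f) w) (p : Fin l × Fin r) :
    SignType.sign (signSum f p) = w.sign p := by
  have key : ∀ u, f u ≠ 0 → u.sign p ≠ 0 → w.sign p = u.sign p := fun u hu =>
    XWord.le_iff_sign.1 (hw.2 hu) p
  have hwpos : 0 < f w := lt_of_le_of_ne (h0 w) (Ne.symm hw.1)
  rcases hs : w.sign p with _ | _ | _
  · have : signSum f p = 0 := by
      refine Finset.sum_eq_zero fun u _ => ?_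
      by_cases hu : f u = 0
      · simp [hu]
      · by_cases hs' : u.sign p = 0
        · simp [hs']
        · exact absurd ((key u hu hs').symm.trans hs) hs'
    simp [this]
  · have : 0 < ∑ u, - (f u * (u.sign p : ℝ)) := by
      refine Finset.sum_pos' (fun u _ => ?_) ⟨w, Finset.mem_univ _, by simp [hs, hwpos]⟩
      by_cases hu : f u = 0
      · simp [hu]
      · by_cases hs' : u.sign p = 0
        · simp [hs']
        · simp [(key u hu hs').symm.trans hs, h0 u]
    rw [Finset.sum_neg_distrib] at this
    exact sign_neg (neg_pos.1 this)
  · have : 0 < ∑ u, f u * (u.sign p : ℝ) := by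
      refine Finset.sum_pos' (fun u _ => ?_) ⟨w, Finset.mem_univ _, by simp [hs, hwpos]⟩
      by_cases hu : f u = 0
      · simp [hu]
      · by_cases hs' : u.sign p = 0
        · simp [hs']
        · simp [(key u hu hs').symm.trans hs, h0 u]
    exact sign_pos this

theorem exists_isGreatest_support {f : XWord l r → ℝ}
    (hc : IsChain (· ≤ ·) (Function.support f)) (hf : f ≠ 0) :
    ∃ w, IsGreatest (Function.support f) w := by
  obtain ⟨w, hw⟩ := (Set.toFinite (Function.support f)).exists_maximal
    (Function.support_nonempty_iff.2 hf)
  refine ⟨w, hw.1, fun u hu => ?_⟩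
  rcases hc.total hu hw.1 with h | h
  · exact h
  · exact hw.2 hu h

theorem signSum_injOn_aux (N : ℕ) : ∀ {f g : XWord l r → ℝ}, (∀ w, 0 ≤ f w) → (∀ w, 0 ≤ g w) →
    IsChain (· ≤ ·) (Function.support f) → IsChain (· ≤ ·) (Function.support g) →
    ∑ w, f w = ∑ w, g w → signSum f = signSum g →
    (Function.support f).ncard + (Function.support g).ncard ≤ N → f = g := by
  classical
  induction N with
  | zero =>
    intro f g _ _ _ _ _ _ hN
    have h1 : Function.support f = ∅ := (Set.ncard_eq_zero (Set.toFinite _)).1 (by omega)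
    have h2 : Function.support g = ∅ := (Set.ncard_eq_zero (Set.toFinite _)).1 (by omega)
    rw [Function.support_eq_empty_iff] at h1 h2
    rw [h1, h2]
  | succ N ih =>
    intro f g hf hg cf cg hs hss hN
    have zero_of_sum : ∀ {f : XWord l r → ℝ}, (∀ w, 0 ≤ f w) → ∑ w, f w = 0 → f = 0 := by
      intro f hf h
      ext w
      exact (Finset.sum_eq_zero_iff_of_nonneg fun w _ => hf w).1 h w (Finset.mem_univ w)
    by_cases hf0 : f = 0
    · rw [hf0, zero_of_sum hg (by rw [← hs, hf0]; simp)]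
    by_cases hg0 : g = 0
    · rw [hg0, zero_of_sum hf (by rw [hs, hg0]; simp)]
    obtain ⟨w, hw⟩ := exists_isGreatest_support cf hf0
    obtain ⟨w', hw'⟩ := exists_isGreatest_support cg hg0
    obtain rfl : w = w' := XWord.sign_injective (funext fun p => by
      rw [← sign_signSum_of_isGreatest hf hw, ← sign_signSum_of_isGreatest hg hw', hss])
    have step : ∀ {f g : XWord l r → ℝ}, (∀ w, 0 ≤ f w) → (∀ w, 0 ≤ g w) →
        IsChain (· ≤ ·) (Function.support f) → IsChain (· ≤ ·) (Function.support g) →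
        ∑ w, f w = ∑ w, g w → signSum f = signSum g →
        (Function.support f).ncard + (Function.support g).ncard ≤ N + 1 →
        f w ≠ 0 → g w ≠ 0 → f w ≤ g w → f = g := by
      intro f g hf hg cf cg hs hss hN hfw hgw hle
      have hsub : ∀ h : XWord l r → ℝ, h w ≠ 0 →
          Function.support (h - Pi.single w (f w)) ⊆ Function.support h := by
        intro h hh u hu hu0
        by_cases huw : u = w
        · exact hh (huw ▸ hu0)
        · exact hu (by simp [Pi.single_eq_of_ne huw, hu0])
      have hsubf : Function.support (f - Pi.single w (f w)) ⊂ Function.support f :=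
        (Set.ssubset_iff_of_subset (hsub f hfw)).2 ⟨w, hfw, by simp⟩
      have c1 := Set.ncard_lt_ncard hsubf (Set.toFinite _)
      have c2 := Set.ncard_le_ncard (hsub g hgw) (Set.toFinite _)
      refine sub_left_inj.1 (ih (f := f - Pi.single w (f w)) (g := g - Pi.single w (f w)) ?_ ?_
        (cf.mono (hsub f hfw)) (cg.mono (hsub g hgw)) ?_ ?_ (by omega))
      · intro u
        by_cases huw : u = w
        · simp [huw]
        · simp [Pi.single_eq_of_ne huw, hf u]
      · intro u
        by_cases huw : u = w
        · simp [huw, hle]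
        · simp [Pi.single_eq_of_ne huw, hg u]
      · simp [Finset.sum_sub_distrib, hs]
      · rw [signSum_sub, signSum_sub, hss]
    rcases le_total (f w) (g w) with h | h
    · exact step hf hg cf cg hs hss hN hw.1 hw'.1 h
    · exact (step hg hf cg cf hs.symm hss.symm (by omega) hw'.1 hw.1 h).symm

theorem exists_sign_eq {T : ℝ} (hT : 0 < T) {c : Fin l × Fin r → ℝ}
    (hc : c ∈ staircaseMatrices l r T) : ∃ w : XWord l r, ∀ p, w.sign p = SignType.sign (c p) := by
  obtain ⟨-, h1, h2⟩ := hc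
  obtain ⟨w, hA, hB, hw⟩ := exists_wordSign_eq l r
    (fun i j => if h : i < l ∧ j < r then SignType.sign (c (⟨i, h.1⟩, ⟨j, h.2⟩)) else 0)
    (by
      intro i i' j hi hi' hj hs
      have hil : i < l := hi.trans hi'
      simp only [hil, hi', hj, and_self, dite_true] at hs ⊢
      have := h1 ⟨i, hil⟩ ⟨i', hi'⟩ ⟨j, hj⟩ hi
        (lt_of_le_of_lt (not_lt.1 fun h => hs (sign_pos h)) hT)
      rw [this]
      exact sign_neg (by linarith))
    (by
      intro i j j' hj hi hj' hs
      have hjr : j < r := hj.trans hj'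
      simp only [hi, hjr, hj', and_self, dite_true] at hs ⊢
      have := h2 ⟨i, hi⟩ ⟨j, hjr⟩ ⟨j', hj'⟩ hj
        (lt_of_lt_of_le (neg_lt_zero.2 hT) (not_lt.1 fun h => hs (sign_neg h)))
      rw [this]
      exact sign_pos hT)
  refine ⟨⟨w, hA, hB⟩, fun p => ?_⟩
  have := hw p.1 p.1.2 p.2 p.2.2
  simpa [XWord.sign] using this

theorem exists_signSum_eq (N : ℕ) : ∀ {T : ℝ} {c : Fin l × Fin r → ℝ}, 0 ≤ T →
    c ∈ staircaseMatrices l r T → (Function.support c).ncard ≤ N →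
    ∃ f : XWord l r → ℝ, (∀ w, 0 ≤ f w) ∧ IsChain (· ≤ ·) (Function.support f) ∧
      ∑ w, f w = T ∧ signSum f = c ∧
      ∀ u ∈ Function.support f, ∀ p, u.sign p ≠ 0 → SignType.sign (c p) = u.sign p := by
  classical
  induction N with
  | zero =>
    intro T c hT hc hN
    have hc0 : c = 0 := by
      rw [← Function.support_eq_empty_iff]
      exact (Set.ncard_eq_zero (Set.toFinite _)).1 (by omega)
    rcases hT.eq_or_lt with rfl | hT
    · refine ⟨0, by simp, by simp, by simp, ?_, by simp⟩
      ext p; simp [signSum, hc0]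
    obtain ⟨w, hw⟩ := exists_sign_eq hT hc
    have hw0 : ∀ p, w.sign p = 0 := fun p => by rw [hw, hc0]; simp
    refine ⟨Pi.single w T, ?_, ?_, by simp, ?_, ?_⟩
    · have : (0 : XWord l r → ℝ) ≤ Pi.single w T := Pi.single_nonneg.2 hT.le
      exact this
    · rw [Pi.support_single_of_ne hT.ne']; exact IsChain.singleton
    · ext p; rw [signSum_single, hw0, hc0]; simp
    · rw [Pi.support_single_of_ne hT.ne']
      rintro u rfl p hp
      exact absurd (hw0 p) hp
  | succ N ih =>
    intro T c hT hc hN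
    by_cases hc0 : c = 0
    · exact ih hT hc (by simp [hc0])
    obtain ⟨p₀, hp₀, hmin⟩ := Set.exists_min_image (Function.support c) (fun p => |c p|)
      (Set.toFinite _) (Function.support_nonempty_iff.2 hc0)
    have he : 0 < |c p₀| := abs_pos.2 hp₀
    have heT : |c p₀| ≤ T := hc.1 p₀
    obtain ⟨w, hw⟩ := exists_sign_eq (he.trans_le heT) hc
    set e := |c p₀|
    set c' : Fin l × Fin r → ℝ := fun p => c p - e * (SignType.sign (c p) : ℝ) with hc'
    have hpos : ∀ p, 0 < c p → c' p = c p - e ∧ e ≤ c p := fun p hp =>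
      ⟨by simp [hc', sign_pos hp], by simpa [abs_of_pos hp] using hmin p hp.ne'⟩
    have hneg : ∀ p, c p < 0 → c' p = c p + e ∧ e ≤ -c p := fun p hp =>
      ⟨by simp [hc', sign_neg hp], by simpa [abs_of_neg hp] using hmin p hp.ne⟩
    have hzero : ∀ p, c p = 0 → c' p = 0 := fun p hp => by simp [hc', hp]
    have hmem : c' ∈ staircaseMatrices l r (T - e) := by
      refine ⟨fun p => ?_, fun i i' j hi h => ?_, fun i j j' hj h => ?_⟩
      · have := abs_le.1 (hc.1 p)
        rw [abs_le]
        rcases lt_trichotomy (c p) 0 with h | h | h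
        · obtain ⟨h1, h2⟩ := hneg p h; constructor <;> linarith
        · rw [hzero p h]; constructor <;> linarith
        · obtain ⟨h1, h2⟩ := hpos p h; constructor <;> linarith
      · have hlt : c (i, j) < T := by
          by_contra hge
          have := (hpos (i, j) (by linarith)).1
          linarith
        have := hc.2.1 i i' j hi hlt
        rw [(hneg (i', j) (by linarith)).1, this]; ring
      · have hlt : -T < c (i, j) := by
          by_contra hge
          have := (hneg (i, j) (by linarith)).1
          linarith
        have := hc.2.2 i j j' hj hlt
        rw [(hpos (i, j') (by linarith)).1, this]
    have hsup : Function.support c' ⊂ Function.support c := by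
      have hsub : Function.support c' ⊆ Function.support c := fun p hp h => hp (hzero p h)
      refine (Set.ssubset_iff_of_subset hsub).2 ⟨p₀, hp₀, ?_⟩
      rw [Function.mem_support, not_not]
      rcases lt_or_gt_of_ne hp₀ with h | h
      · rw [(hneg p₀ h).1]; simp [e, abs_of_neg h]
      · rw [(hpos p₀ h).1]; simp [e, abs_of_pos h]
    have := Set.ncard_lt_ncard hsup (Set.toFinite _)
    obtain ⟨f, f0, fc, fs, fss, fle⟩ := ih (sub_nonneg.2 heT) hmem (by omega)
    have hsgn : ∀ p, c' p ≠ 0 → SignType.sign (c p) = SignType.sign (c' p) := by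
      intro p hp
      rcases lt_trichotomy (c p) 0 with h | h | h
      · obtain ⟨h1, h2⟩ := hneg p h
        rw [sign_neg h, sign_neg (lt_of_le_of_ne (by linarith) hp)]
      · exact absurd (hzero p h) hp
      · obtain ⟨h1, h2⟩ := hpos p h
        rw [sign_pos h, sign_pos (lt_of_le_of_ne (by linarith) hp.symm)]
    have hle : ∀ u ∈ Function.support f, ∀ p, u.sign p ≠ 0 →
        SignType.sign (c p) = u.sign p := by
      intro u hu p hp
      have h := fle u hu p hp
      rw [hsgn p (fun h0 => hp (by rw [← h, h0, sign_zero])), h]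
    have hsub : Function.support (f + Pi.single w e) ⊆ insert w (Function.support f) := by
      intro u hu
      by_contra hn
      rw [Set.mem_insert_iff, not_or, Function.mem_support, not_not] at hn
      exact hu (by simp [Pi.single_eq_of_ne hn.1, hn.2])
    refine ⟨f + Pi.single w e, ?_, ?_, ?_, ?_, ?_⟩
    · have : (0 : XWord l r → ℝ) ≤ Pi.single w e := Pi.single_nonneg.2 he.le
      exact fun u => add_nonneg (f0 u) (this u)
    · refine (fc.insert fun u hu _ => Or.inr (XWord.le_iff_sign.2 fun p hp => ?_)).mono hsub
      rw [hw, hle u hu p hp]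
    · simp [Finset.sum_add_distrib, fs]
    · ext p
      rw [signSum_add, Pi.add_apply, signSum_single, fss, hw]
      simp [hc']
    · intro u hu p hp
      rcases hsub hu with rfl | hu
      · exact (hw p).symm
      · exact hle u hu p hp

theorem signSum_mem_staircaseMatrices {f : XWord l r → ℝ} (h0 : ∀ w, 0 ≤ f w)
    (hc : IsChain (· ≤ ·) (Function.support f)) (h1 : ∑ w, f w = 1) :
    signSum f ∈ staircaseMatrices l r 1 := by
  have hconst : ∀ p (s : SignType), (∀ w ∈ Function.support f, w.sign p = s) →
      signSum f p = s := by
    intro p s h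
    have : signSum f p = ∑ w, f w * (s : ℝ) := by
      refine Finset.sum_congr rfl fun w _ => ?_
      by_cases hw : f w = 0
      · simp [hw]
      · rw [h w hw]
    rw [this, ← Finset.sum_mul, h1, one_mul]
  have hchain : ∀ u ∈ Function.support f, ∀ w ∈ Function.support f, ∀ p, u.sign p ≠ 0 →
      w.sign p ≠ 0 → u.sign p = w.sign p := by
    intro u hu w hw p hup hwp
    rcases hc.total hu hw with h | h
    · exact (XWord.le_iff_sign.1 h p hup).symm
    · exact XWord.le_iff_sign.1 h p hwp
  have hdom : ∀ p q (s s' : SignType), s ≠ 0 → s' ≠ 0 →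
      (∀ w : XWord l r, w.sign p ≠ s → w.sign q = s') →
      signSum f p ≠ s → signSum f q = s' := by
    intro p q s s' hs hs' hrow hne
    obtain ⟨u, hu, hup⟩ : ∃ u ∈ Function.support f, u.sign p ≠ s := by
      by_contra! h
      exact hne (hconst p s h)
    refine hconst q s' fun w hw => ?_
    by_cases hwp : w.sign p = s
    · rcases hc.total hu hw with h | h
      · have hq := hrow u hup
        rw [← hq]
        exact XWord.le_iff_sign.1 h q (by rw [hq]; exact hs')
      · exact absurd ((XWord.le_iff_sign.1 h p (by rw [hwp]; exact hs)).trans hwp) hup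
    · exact hrow w hwp
  refine ⟨fun p => ?_, fun i i' j hi h => ?_, fun i j j' hj h => ?_⟩
  · rw [← h1]
    refine (Finset.abs_sum_le_sum_abs _ _).trans (Finset.sum_le_sum fun w _ => ?_)
    rw [abs_mul, abs_of_nonneg (h0 w)]
    refine mul_le_of_le_one_right (h0 w) ?_
    cases w.sign p <;> simp
  · have := hdom (i, j) (i', j) 1 (-1) (by decide) (by decide)
      (fun w hw => w.sign_row j hi hw) (by simpa using h.ne)
    simpa using this
  · have := hdom (i, j) (i, j') (-1) 1 (by decide) (by decide)
      (fun w hw => w.sign_col i hj hw) (by simpa using h.ne')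
    simpa using this

theorem isCompact_posetRealization_XWord : IsCompact (PosetRealization (XWord l r)) := by
  have heq : PosetRealization (XWord l r) = {f | (∀ p, 0 ≤ f p) ∧ ∑ p, f p = 1 ∧
      ∀ p q, ¬ (p ≤ q ∨ q ≤ p) → f p * f q = 0} := by
    ext f
    simp only [PosetRealization, Set.mem_ofPred_eq, finsum_eq_sum_of_fintype]
    refine ⟨fun ⟨h1, _, h2, h3⟩ => ⟨h1, h2, fun p q hpq => ?_⟩,
      fun ⟨h1, h2, h3⟩ => ⟨h1, Set.toFinite _, h2, fun p hp q hq _ => ?_⟩⟩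
    · by_contra hne
      exact hpq (h3.total (left_ne_zero_of_mul hne) (right_ne_zero_of_mul hne))
    · by_contra hne
      exact mul_ne_zero hp hq (h3 p q hne)
  refine IsCompact.of_isClosed_subset
    (isCompact_univ_pi (s := fun _ : XWord l r => Set.Icc (0 : ℝ) 1) fun _ => isCompact_Icc) ?_ ?_
  · rw [heq]
    simp only [Set.ofPred_and, Set.ofPred_forall]
    refine IsClosed.inter (isClosed_iInter fun p => isClosed_le continuous_const
      (continuous_apply p)) (IsClosed.inter (isClosed_eq (by fun_prop) continuous_const) ?_)
    exact isClosed_iInter fun p => isClosed_iInter fun q => isClosed_iInter fun _ =>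
      isClosed_eq (by fun_prop) continuous_const
  · rintro f hf p -
    rw [heq] at hf
    refine ⟨hf.1 p, ?_⟩
    rw [← hf.2.1]
    exact Finset.single_le_sum (fun q _ => hf.1 q) (Finset.mem_univ p)

theorem nonempty_homeomorph_staircaseMatrices (l r : ℕ) :
    Nonempty (↥(PosetRealization (XWord l r)) ≃ₜ ↥(staircaseMatrices l r 1)) := by
  have : CompactSpace (PosetRealization (XWord l r)) :=
    isCompact_iff_compactSpace.1 isCompact_posetRealization_XWord
  have hsum : ∀ f ∈ PosetRealization (XWord l r), ∑ w, f w = 1 := fun f hf => by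
    rw [← finsum_eq_sum_of_fintype]; exact hf.2.2.1
  let F : PosetRealization (XWord l r) → staircaseMatrices l r 1 := fun f =>
    ⟨signSum f.1, signSum_mem_staircaseMatrices f.2.1 f.2.2.2.2 (hsum f.1 f.2)⟩
  have hF : Continuous F := by
    refine Continuous.subtype_mk (continuous_pi fun p => ?_) _
    unfold signSum
    exact continuous_finsetSum _ fun w _ =>
      ((continuous_apply w).comp continuous_subtype_val).mul continuous_const
  refine ⟨Continuous.homeoOfEquivCompactToT2 (f := Equiv.ofBijective F ⟨?_, ?_⟩) hF⟩
  · intro f g h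
    refine Subtype.ext (signSum_injOn_aux _ f.2.1 g.2.1 f.2.2.2.2 g.2.2.2.2 ?_
      (congrArg Subtype.val h) le_rfl)
    rw [hsum f.1 f.2, hsum g.1 g.2]
  · rintro ⟨c, hc⟩
    obtain ⟨f, h0, h1, h2, h3, -⟩ := exists_signSum_eq _ zero_le_one hc le_rfl
    exact ⟨⟨f, h0, Set.toFinite _, by rw [finsum_eq_sum_of_fintype]; exact h2, h1⟩,
      Subtype.ext h3⟩

end

/-! ### Degenerating configurations of points on a line -/

section
open Filter Topology

/-- A system of pairwise compatible brackets in `{0, …, N}` containing the full interval. -/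
structure IsBracketSystem (N : ℕ) (S : Finset (ℕ × ℕ)) : Prop where
  lt : ∀ b ∈ S, b.1 < b.2
  le : ∀ b ∈ S, b.2 ≤ N
  root : (0, N) ∈ S
  compat : ∀ b ∈ S, ∀ c ∈ S,
    b.2 < c.1 ∨ c.2 < b.1 ∨ (c.1 ≤ b.1 ∧ b.2 ≤ c.2) ∨ (b.1 ≤ c.1 ∧ c.2 ≤ b.2)

/-- Some bracket contains the leaves `i` and `j` but not `k`. -/
def Closer (S : Finset (ℕ × ℕ)) (i j k : ℕ) : Prop :=
  ∃ b ∈ S, (b.1 ≤ i ∧ i ≤ b.2) ∧ (b.1 ≤ j ∧ j ≤ b.2) ∧ ¬ (b.1 ≤ k ∧ k ≤ b.2)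

/-- The array `X` of limit ratios lies in the open stratum described by `S`. -/
structure IsStratumPoint (N : ℕ) (S : Finset (ℕ × ℕ)) (X : ℕ → ℕ → ℕ → ℝ) : Prop where
  nonneg : ∀ {i j k}, i < j → j < k → k ≤ N → 0 ≤ X i j k
  le_one : ∀ {i j k}, i < j → j < k → k ≤ N → X i j k ≤ 1
  zero_iff : ∀ {i j k}, i < j → j < k → k ≤ N → (X i j k = 0 ↔ Closer S i j k)
  one_iff : ∀ {i j k}, i < j → j < k → k ≤ N → (X i j k = 1 ↔ Closer S j k i)

/-- The configurations `τ s 0 < ⋯ < τ s N` of points on the line converge to the array of ratios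
`X` along the filter `G`. -/
structure TendsToRatios {ι : Type*} (N : ℕ) (X : ℕ → ℕ → ℕ → ℝ) (G : Filter ι)
    (τ : ι → ℕ → ℝ) : Prop where
  lt : ∀ᶠ s in G, ∀ i k, i < k → k ≤ N → τ s i < τ s k
  lim : ∀ {i j k}, i < j → j < k → k ≤ N →
    Tendsto (fun s => (τ s j - τ s i) / (τ s k - τ s i)) G (𝓝 (X i j k))

variable {ι : Type*} {N : ℕ} {S : Finset (ℕ × ℕ)} {X : ℕ → ℕ → ℕ → ℝ} {G : Filter ι}
  {τ : ι → ℕ → ℝ}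

theorem TendsToRatios.le (h : TendsToRatios N X G τ) :
    ∀ᶠ s in G, ∀ i k, i ≤ k → k ≤ N → τ s i ≤ τ s k := by
  filter_upwards [h.lt] with s hs i k hik hk
  rcases hik.eq_or_lt with rfl | hik
  · exact le_rfl
  · exact (hs i k hik hk).le

theorem TendsToRatios.lim_one_sub (h : TendsToRatios N X G τ) {i j k : ℕ} (hij : i < j)
    (hjk : j < k) (hk : k ≤ N) :
    Tendsto (fun s => (τ s k - τ s j) / (τ s k - τ s i)) G (𝓝 (1 - X i j k)) := by
  refine (tendsto_const_nhds.sub (h.lim hij hjk hk)).congr' ?_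
  filter_upwards [h.lt] with s hs
  have := hs i k (hij.trans hjk) hk
  rw [eq_div_iff (by linarith), sub_mul, div_mul_cancel₀ _ (by linarith)]
  ring

theorem TendsToRatios.exists_pos_lim (hX : IsStratumPoint N S X) (h : TendsToRatios N X G τ)
    {p i k q : ℕ} (hpi : p ≤ i) (hik : i < k) (hkq : k ≤ q) (hq : q ≤ N)
    (hp : ¬ Closer S i k p) (hq' : ¬ Closer S i k q) :
    ∃ L > 0, Tendsto (fun s => (τ s k - τ s i) / (τ s q - τ s p)) G (𝓝 L) := by
  obtain ⟨L₁, hL₁, h₁⟩ : ∃ L > 0,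
      Tendsto (fun s => (τ s k - τ s i) / (τ s q - τ s i)) G (𝓝 L) := by
    rcases hkq.eq_or_lt with rfl | hkq
    · refine ⟨1, one_pos, tendsto_const_nhds.congr' ?_⟩
      filter_upwards [h.lt] with s hs
      have := hs i k hik hq
      rw [div_self (by linarith)]
    · refine ⟨X i k q, lt_of_le_of_ne (hX.nonneg hik hkq hq) ?_, h.lim hik hkq hq⟩
      exact fun h0 => hq' ((hX.zero_iff hik hkq hq).1 h0.symm)
  obtain ⟨L₂, hL₂, h₂⟩ : ∃ L > 0,
      Tendsto (fun s => (τ s q - τ s i) / (τ s q - τ s p)) G (𝓝 L) := by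
    rcases hpi.eq_or_lt with rfl | hpi
    · refine ⟨1, one_pos, tendsto_const_nhds.congr' ?_⟩
      filter_upwards [h.lt] with s hs
      have := hs p q (by omega) hq
      rw [div_self (by linarith)]
    · refine ⟨1 - X p i q, ?_, h.lim_one_sub hpi (hik.trans_le hkq) hq⟩
      refine sub_pos.2 (lt_of_le_of_ne (hX.le_one hpi (hik.trans_le hkq) hq) fun h1 => hp ?_)
      obtain ⟨b, hb, hb1, hb2, hb3⟩ := (hX.one_iff hpi (hik.trans_le hkq) hq).1 h1
      exact ⟨b, hb, hb1, ⟨by omega, by omega⟩, hb3⟩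
  refine ⟨L₁ * L₂, mul_pos hL₁ hL₂, (h₁.mul h₂).congr' ?_⟩
  filter_upwards [h.lt] with s hs
  have h1 := hs i q (hik.trans_le hkq) hq
  have h2 := hs p q (by omega) hq
  exact div_mul_div_cancel₀ (by linarith)

theorem TendsToRatios.tendsto_zero (hX : IsStratumPoint N S X) (h : TendsToRatios N X G τ)
    {b : ℕ × ℕ} (hb : b ∈ S) {i i' k' k : ℕ} (hi : i ≤ i') (hi' : b.1 ≤ i') (hik : i' < k')
    (hk' : k' ≤ b.2) (hk : k' ≤ k) (hkN : k ≤ N) (hn : ¬ (b.1 ≤ i ∧ k ≤ b.2)) :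
    Tendsto (fun s => (τ s k' - τ s i') / (τ s k - τ s i)) G (𝓝 0) := by
  have hnn : ∀ᶠ s in G, 0 ≤ (τ s k' - τ s i') / (τ s k - τ s i) := by
    filter_upwards [h.lt, h.le] with s hs hs'
    exact div_nonneg (by linarith [hs i' k' hik (hk.trans hkN)])
      (by linarith [hs i k (by omega) hkN])
  by_cases hkb : k ≤ b.2
  · have hib : i < b.1 := by by_contra hh; exact hn ⟨by omega, hkb⟩
    have h1 : X i i' k' = 1 := (hX.one_iff (by omega) hik (hk.trans hkN)).2
      ⟨b, hb, ⟨by omega, by omega⟩, ⟨by omega, by omega⟩, by omega⟩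
    have h2 := h.lim_one_sub (i := i) (j := i') (by omega) hik (hk.trans hkN)
    rw [h1, sub_self] at h2
    refine tendsto_of_tendsto_of_tendsto_of_le_of_le' tendsto_const_nhds h2 hnn ?_
    filter_upwards [h.lt, h.le] with s hs hs'
    have h3 := hs i k' (by omega) (hk.trans hkN)
    have h4 := hs' k' k hk hkN
    exact div_le_div_of_nonneg_left (by linarith [hs i' k' hik (hk.trans hkN)]) (by linarith)
      (by linarith)
  · have h1 : X i' k' k = 0 := (hX.zero_iff hik (by omega) hkN).2
      ⟨b, hb, ⟨by omega, by omega⟩, ⟨by omega, by omega⟩, by omega⟩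
    have h2 := h.lim (i := i') (j := k') (k := k) hik (by omega) hkN
    rw [h1] at h2
    refine tendsto_of_tendsto_of_tendsto_of_le_of_le' tendsto_const_nhds h2 hnn ?_
    filter_upwards [h.lt, h.le] with s hs hs'
    have h3 := hs i' k (by omega) hkN
    have h4 := hs' i i' hi (by omega)
    exact div_le_div_of_nonneg_left (by linarith [hs i' k' hik (hk.trans hkN)]) (by linarith)
      (by linarith)

/-- Multiply all distances inside the bracket `b` by `μ`. -/
def rescale (b : ℕ × ℕ) (μ : ℝ) (t : ℕ → ℝ) : ℕ → ℝ := fun i =>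
  t i + (μ - 1) * (t (max b.1 (min i b.2)) - t b.1)

theorem rescale_sub_of_disjoint {b : ℕ × ℕ} (hb : b.1 < b.2) (μ : ℝ) (t : ℕ → ℝ) {i k : ℕ}
    (hik : i < k) (h : k ≤ b.1 ∨ b.2 ≤ i) :
    rescale b μ t k - rescale b μ t i = t k - t i := by
  have : max b.1 (min i b.2) = max b.1 (min k b.2) := by omega
  simp only [rescale, this]; ring

theorem rescale_sub_of_overlap {b : ℕ × ℕ} (hb : b.1 < b.2) (μ : ℝ) (t : ℕ → ℝ) {i k : ℕ}
    (hi : i < b.2) (hk : b.1 < k) : rescale b μ t k - rescale b μ t i =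
      t k - t i + (μ - 1) * (t (min k b.2) - t (max b.1 i)) := by
  have h1 : max b.1 (min i b.2) = max b.1 i := by omega
  have h2 : max b.1 (min k b.2) = min k b.2 := by omega
  simp only [rescale, h1, h2]; ring

theorem rescale_sub_of_mem {b : ℕ × ℕ} (μ : ℝ) (t : ℕ → ℝ) {i k : ℕ}
    (hi : b.1 ≤ i) (hik : i < k) (hk : k ≤ b.2) : rescale b μ t k - rescale b μ t i =
      μ * (t k - t i) := by
  rw [rescale_sub_of_overlap (by omega) μ t (by omega) (by omega), min_eq_left hk,
    max_eq_right hi]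
  ring

theorem TendsToRatios.tendsto_rescale_div (hX : IsStratumPoint N S X)
    (h : TendsToRatios N X G τ) {b : ℕ × ℕ} (hb : b ∈ S) (hlt : b.1 < b.2) (μ : ι → ℝ)
    (hsmall : ∀ i k, i < k → k ≤ N → i < b.2 → b.1 < k → ¬ (b.1 ≤ i ∧ k ≤ b.2) →
      Tendsto (fun s => μ s * (τ s (min k b.2) - τ s (max b.1 i)) / (τ s k - τ s i)) G (𝓝 0))
    {i k : ℕ} (hik : i < k) (hk : k ≤ N) (hn : ¬ (b.1 ≤ i ∧ k ≤ b.2)) :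
    Tendsto (fun s => (rescale b (μ s) (τ s) k - rescale b (μ s) (τ s) i) / (τ s k - τ s i))
      G (𝓝 1) := by
  by_cases hov : i < b.2 ∧ b.1 < k
  · have h1 := hsmall i k hik hk hov.1 hov.2 hn
    have h2 := h.tendsto_zero hX hb (i := i) (i' := max b.1 i) (k' := min k b.2) (k := k)
      (by omega) (by omega) (by omega) (by omega) (by omega) hk hn
    have h3 := (tendsto_const_nhds (x := (1 : ℝ))).add (h1.sub h2)
    simp only [sub_zero, add_zero] at h3
    refine h3.congr' ?_
    filter_upwards [h.lt] with s hs
    have := hs i k hik hk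
    rw [rescale_sub_of_overlap hlt _ _ hov.1 hov.2]
    have : τ s k - τ s i ≠ 0 := by linarith
    field_simp
  · refine tendsto_const_nhds.congr' ?_
    filter_upwards [h.lt] with s hs
    have := hs i k hik hk
    rw [rescale_sub_of_disjoint hlt _ _ hik (by omega), div_self (by linarith)]

theorem TendsToRatios.rescale (hX : IsStratumPoint N S X)
    (h : TendsToRatios N X G τ) {b : ℕ × ℕ} (hb : b ∈ S) (hlt : b.1 < b.2) (hbN : b.2 ≤ N)
    (μ : ι → ℝ) (hμ : ∀ᶠ s in G, 0 < μ s)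
    (hsmall : ∀ i k, i < k → k ≤ N → i < b.2 → b.1 < k → ¬ (b.1 ≤ i ∧ k ≤ b.2) →
      Tendsto (fun s => μ s * (τ s (min k b.2) - τ s (max b.1 i)) / (τ s k - τ s i)) G (𝓝 0)) :
    TendsToRatios N X G (fun s => rescale b (μ s) (τ s)) := by
  have hpos : ∀ᶠ s in G, ∀ i k, i < k → k ≤ N →
      _root_.rescale b (μ s) (τ s) i < _root_.rescale b (μ s) (τ s) k := by
    filter_upwards [h.lt, h.le, hμ] with s hs hs' hμs i k hik hk
    rw [← sub_pos]
    by_cases hov : i < b.2 ∧ b.1 < k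
    · rw [rescale_sub_of_overlap hlt _ _ hov.1 hov.2]
      have h1 := hs (max b.1 i) (min k b.2) (by omega) (by omega)
      have h2 := hs' i (max b.1 i) (by omega) (by omega)
      have h3 := hs' (min k b.2) k (by omega) hk
      have h4 := mul_pos hμs (sub_pos.2 h1)
      nlinarith
    · rw [rescale_sub_of_disjoint hlt _ _ hik (by omega)]
      exact sub_pos.2 (hs i k hik hk)
  have hdiv := fun {i k} => h.tendsto_rescale_div hX hb hlt μ hsmall (i := i) (k := k)
  refine ⟨hpos, fun {i j k} hij hjk hk => ?_⟩
  by_cases hn : b.1 ≤ i ∧ k ≤ b.2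
  · refine (h.lim hij hjk hk).congr' ?_
    filter_upwards [hμ] with s hμs
    rw [rescale_sub_of_mem _ _ hn.1 hij (by omega), rescale_sub_of_mem _ _ hn.1 (by omega) hn.2,
      mul_div_mul_left _ _ hμs.ne']
  have hik := hdiv (hij.trans hjk) hk hn
  by_cases hn' : b.1 ≤ i ∧ j ≤ b.2
  · have hX0 : X i j k = 0 := (hX.zero_iff hij hjk hk).2
      ⟨b, hb, ⟨by omega, by omega⟩, ⟨by omega, by omega⟩, by omega⟩
    have h1 := hsmall i k (hij.trans hjk) hk (by omega) (by omega) hn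
    have h2 : Tendsto (fun s => μ s * (τ s j - τ s i) / (τ s k - τ s i)) G (𝓝 0) := by
      refine tendsto_of_tendsto_of_tendsto_of_le_of_le' tendsto_const_nhds h1 ?_ ?_
      · filter_upwards [h.lt, hμ] with s hs hμs
        exact div_nonneg (mul_nonneg hμs.le (by linarith [hs i j hij (by omega)]))
          (by linarith [hs i k (by omega) hk])
      · filter_upwards [h.lt, h.le, hμ] with s hs hs' hμs
        have := hs i k (by omega) hk
        rw [max_eq_right hn'.1]
        refine div_le_div_of_nonneg_right (mul_le_mul_of_nonneg_left ?_ hμs.le) (by linarith)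
        linarith [hs' j (min k b.2) (by omega) (by omega)]
    have h3 := h2.div hik one_ne_zero
    rw [zero_div] at h3
    rw [hX0]
    refine h3.congr' ?_
    filter_upwards [h.lt, hpos] with s hs hs'
    have := hs i k (by omega) hk
    simp only [Pi.div_apply]
    rw [rescale_sub_of_mem _ _ hn'.1 hij hn'.2, div_div_div_cancel_right₀ (by linarith)]
  · have h1 := ((hdiv hij (by omega) hn').mul (h.lim hij hjk hk)).div hik one_ne_zero
    rw [one_mul, div_one] at h1
    refine h1.congr' ?_
    filter_upwards [h.lt, hpos] with s hs hs'
    have h2 := hs i k (by omega) hk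
    have h3 := hs i j (by omega) (by omega)
    simp only [Pi.div_apply]
    rw [div_mul_div_cancel₀ (by linarith), div_div_div_cancel_right₀ (by linarith)]

theorem exists_tendsToRatios_of_scales (hS : IsBracketSystem N S) (hX : IsStratumPoint N S X)
    (h : TendsToRatios N X G τ) (Λ : ℕ × ℕ → ι → ℝ) (hpos : ∀ b, ∀ᶠ s in G, 0 < Λ b s)
    (hroot : Λ (0, N) = 1) (m : ℕ) : ∀ P : Finset (ℕ × ℕ), P.card ≤ m → P ⊆ S → (0, N) ∈ P →
    (∀ b ∈ P, ∀ c ∈ S, c.1 ≤ b.1 → b.2 ≤ c.2 → c ∈ P) →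
    (∀ b ∈ P, ∀ c ∈ P, c.1 ≤ b.1 → b.2 ≤ c.2 → b ≠ c →
      Tendsto (fun s => Λ b s / Λ c s) G (𝓝 0)) →
    ∃ τ' : ι → ℕ → ℝ, TendsToRatios N X G τ' ∧ ∀ b ∈ P,
      Tendsto (fun s => (τ' s b.2 - τ' s b.1) / (Λ b s * (τ' s N - τ' s 0))) G (𝓝 1) := by
  have h0N : 0 < N := hS.lt _ hS.root
  induction m with
  | zero =>
    intro P hP _ hr
    exact absurd hr (by rw [Finset.card_eq_zero.1 (by omega : P.card = 0)]; simp)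
  | succ m ih =>
    intro P hPm hPS hr hup hΛ
    by_cases hne : (P.erase (0, N)).Nonempty
    swap
    · rw [Finset.not_nonempty_iff_eq_empty, Finset.erase_eq_empty_iff] at hne
      refine ⟨τ, h, fun b hb => ?_⟩
      obtain rfl : b = (0, N) := by
        rcases hne with rfl | rfl
        · simp at hr
        · simpa using hb
      refine tendsto_const_nhds.congr' ?_
      filter_upwards [h.lt] with s hs
      have := hs 0 N h0N le_rfl
      rw [hroot, Pi.one_apply, one_mul, div_self (by simp; linarith)]
    obtain ⟨b, hb, hmin⟩ := Finset.exists_min_image _ (fun b : ℕ × ℕ => b.2 - b.1) hne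
    obtain ⟨hbr, hbP⟩ := Finset.mem_erase.1 hb
    have hbS := hPS hbP
    have hblt := hS.lt b hbS
    have hbN := hS.le b hbS
    -- no other bracket of `P` is contained in `b`
    have hnot : ∀ c ∈ P, c ≠ b → ¬ (b.1 ≤ c.1 ∧ c.2 ≤ b.2) := by
      intro c hc hcb hcon
      have hclt := hS.lt c (hPS hc)
      have : ¬ (c.1 = b.1 ∧ c.2 = b.2) := fun hh => hcb (Prod.ext hh.1 hh.2)
      by_cases hcr : c = (0, N)
      · subst hcr; simp only at this hcon; omega
      · have := hmin c (Finset.mem_erase.2 ⟨hcr, hc⟩)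
        omega
    obtain ⟨τ, h, hτ⟩ := ih (P.erase b)
      (by rw [Finset.card_erase_of_mem hbP]; omega) ((Finset.erase_subset _ _).trans hPS)
      (Finset.mem_erase.2 ⟨hbr.symm, hr⟩)
      (by
        intro c hc d hd h1 h2
        obtain ⟨hcb, hcP⟩ := Finset.mem_erase.1 hc
        refine Finset.mem_erase.2 ⟨?_, hup c hcP d hd h1 h2⟩
        rintro rfl
        exact hnot c hcP hcb ⟨h1, h2⟩)
      (fun c hc d hd => hΛ c (Finset.mem_of_mem_erase hc) d (Finset.mem_of_mem_erase hd))
    -- a gap adjacent to `b` is much larger than the prescribed size of `b`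
    have hgap : ∀ e, e + 1 ≤ N → (e = b.2 ∨ e + 1 = b.1) →
        Tendsto (fun s => Λ b s * (τ s N - τ s 0) / (τ s (e + 1) - τ s e)) G (𝓝 0) := by
      intro e heN he
      obtain ⟨c, hc, hcmin⟩ := Finset.exists_min_image
        (P.filter fun c => c.1 ≤ e ∧ e + 1 ≤ c.2) (fun c : ℕ × ℕ => c.2 - c.1)
        ⟨(0, N), Finset.mem_filter.2 ⟨hr, Nat.zero_le _, heN⟩⟩
      obtain ⟨hcP', hce, hec⟩ := Finset.mem_filter.1 hc
      have hcS := hPS hcP'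
      have hcN := hS.le c hcS
      have hcb : c ≠ b := by rintro rfl; omega
      have hcP := Finset.mem_erase.2 ⟨hcb, hcP'⟩
      have hcon : ∀ d ∈ S, d.1 ≤ e → e + 1 ≤ d.2 → d.1 ≤ b.1 ∧ b.2 ≤ d.2 := by
        intro d hd h1 h2
        have := hS.compat b hbS d hd
        omega
      obtain ⟨hcb1, hcb2⟩ := hcon c hcS hce hec
      have hsup : ∀ d ∈ S, d.1 ≤ e → e + 1 ≤ d.2 → d.1 ≤ c.1 ∧ c.2 ≤ d.2 := by
        intro d hd h1 h2
        have hdb := hcon d hd h1 h2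
        have := hcmin d (Finset.mem_filter.2 ⟨hup b hbP d hd hdb.1 hdb.2, h1, h2⟩)
        have := hS.compat c hcS d hd
        omega
      obtain ⟨L, hL, hlim⟩ := h.exists_pos_lim hX (p := c.1) (i := e) (k := e + 1) (q := c.2)
        hce (by omega) hec hcN
        (by rintro ⟨d, hd, h1, h2, h3⟩; have := hsup d hd h1.1 h2.2; omega)
        (by rintro ⟨d, hd, h1, h2, h3⟩; have := hsup d hd h1.1 h2.2; omega)
      have h1 := hΛ b hbP c hcP' hcb1 hcb2 hcb.symm
      have h2 := (h1.div (hτ c hcP) one_ne_zero).div hlim hL.ne'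
      simp only [zero_div] at h2
      refine h2.congr' ?_
      filter_upwards [h.lt, hpos b, hpos c] with s hs hb0 hc0
      have h3 := hs e (e + 1) (by omega) (by omega)
      have h4 := hs c.1 c.2 (hS.lt c hcS) hcN
      have h5 := hs 0 N h0N le_rfl
      have h3' : τ s (e + 1) - τ s e ≠ 0 := by linarith
      have h4' : τ s c.2 - τ s c.1 ≠ 0 := by linarith
      have h5' : τ s N - τ s 0 ≠ 0 := by linarith
      simp only [Pi.div_apply]
      field_simp
    set μ : ι → ℝ := fun s => Λ b s * (τ s N - τ s 0) / (τ s b.2 - τ s b.1) with hμdef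
    have hμ : ∀ᶠ s in G, 0 < μ s := by
      filter_upwards [h.lt, hpos b] with s hs hb0
      exact div_pos (mul_pos hb0 (by linarith [hs 0 N h0N le_rfl]))
        (by linarith [hs b.1 b.2 hblt hbN])
    have hsmall : ∀ i k, i < k → k ≤ N → i < b.2 → b.1 < k → ¬ (b.1 ≤ i ∧ k ≤ b.2) →
        Tendsto (fun s => μ s * (τ s (min k b.2) - τ s (max b.1 i)) / (τ s k - τ s i))
          G (𝓝 0) := by
      intro i k hik hk hib hbk hn
      obtain ⟨e, he, hie, hek⟩ : ∃ e, (e = b.2 ∨ e + 1 = b.1) ∧ i ≤ e ∧ e + 1 ≤ k := by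
        by_cases hkb : k ≤ b.2
        · exact ⟨b.1 - 1, by omega⟩
        · exact ⟨b.2, by omega⟩
      refine tendsto_of_tendsto_of_tendsto_of_le_of_le' tendsto_const_nhds
        (hgap e (by omega) he) ?_ ?_
      · filter_upwards [h.lt, hμ] with s hs hμs
        exact div_nonneg (mul_nonneg hμs.le
          (by linarith [hs (max b.1 i) (min k b.2) (by omega) (by omega)]))
          (by linarith [hs i k hik hk])
      · filter_upwards [h.lt, h.le, hpos b] with s hs hs' hb0
        have h1 := hs b.1 b.2 hblt hbN
        have h2 := hs 0 N h0N le_rfl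
        have h3 := hs' b.1 (max b.1 i) (by omega) (by omega)
        have h4 := hs' (min k b.2) b.2 (by omega) (by omega)
        have h5 := hs e (e + 1) (by omega) (by omega)
        have h6 := hs' i e hie (by omega)
        have h7 := hs' (e + 1) k hek hk
        have h8 : 0 < Λ b s * (τ s N - τ s 0) := mul_pos hb0 (by linarith)
        refine div_le_div₀ h8.le ?_ (by linarith) (by linarith)
        rw [hμdef]
        simp only
        rw [div_mul_eq_mul_div, div_le_iff₀ (by linarith)]
        exact mul_le_mul_of_nonneg_left (by linarith) h8.le
    have hdiv := fun {i k} => h.tendsto_rescale_div hX hbS hblt μ hsmall (i := i) (k := k)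
    refine ⟨_, h.rescale hX hbS hblt hbN μ hμ hsmall, fun d hd => ?_⟩
    have hrt := hdiv (i := 0) (k := N) h0N le_rfl (fun hh => hnot _ hr hbr.symm hh)
    by_cases hdb : d = b
    · subst hdb
      have := hrt.inv₀ one_ne_zero
      rw [inv_one] at this
      refine this.congr' ?_
      filter_upwards [h.lt, hpos d] with s hs hd0
      have h1 := hs d.1 d.2 hblt hbN
      have h1' : τ s d.2 - τ s d.1 ≠ 0 := by linarith
      rw [rescale_sub_of_mem _ _ le_rfl hblt le_rfl, hμdef]
      simp only
      rw [div_mul_cancel₀ _ h1', inv_div, mul_div_mul_left _ _ hd0.ne']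
    · have h1 := ((hdiv (hS.lt d (hPS hd)) (hS.le d (hPS hd)) (hnot d hd hdb)).mul
        (hτ d (Finset.mem_erase.2 ⟨hdb, hd⟩))).div hrt one_ne_zero
      simp only [one_mul, div_one] at h1
      refine h1.congr' ?_
      filter_upwards [h.lt, hpos d] with s hs hd0
      have h2 := hs d.1 d.2 (hS.lt d (hPS hd)) (hS.le d (hPS hd))
      have h3 := hs 0 N h0N le_rfl
      have h2' : τ s d.2 - τ s d.1 ≠ 0 := by linarith
      have h3' : τ s N - τ s 0 ≠ 0 := by linarith
      simp only [Pi.div_apply]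
      rw [div_mul_div_cancel₀ h2', ← div_div _ (Λ d s), ← div_div _ (Λ d s),
        div_div_div_cancel_right₀ h3']

end

/-! ### Limits of ratios in `[0, ∞]` -/

section
open Filter Topology Real
open scoped ENNReal

variable {ι : Type*} {G : Filter ι} {u v w z g h : ι → ℝ}

/-- The ratio `u / v` in `[0, ∞]` tends to `L`. -/
def RatioTendsto (G : Filter ι) (u v : ι → ℝ) (L : ℝ≥0∞) : Prop :=
  Tendsto (fun s => ENNReal.ofReal (u s) / ENNReal.ofReal (v s)) G (𝓝 L)

/-- The ratio `u / v` has a limit in `[0, ∞]`. -/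
def HasRatioLim (G : Filter ι) (u v : ι → ℝ) : Prop := ∃ L, RatioTendsto G u v L

theorem RatioTendsto.congr {u' v' : ι → ℝ} {L : ℝ≥0∞} (h : RatioTendsto G u v L)
    (hu : u =ᶠ[G] u') (hv : v =ᶠ[G] v') : RatioTendsto G u' v' L := by
  refine Tendsto.congr' ?_ h
  filter_upwards [hu, hv] with s h1 h2
  rw [h1, h2]

theorem HasRatioLim.congr {u' v' : ι → ℝ} (h : HasRatioLim G u v)
    (hu : u =ᶠ[G] u') (hv : v =ᶠ[G] v') : HasRatioLim G u' v' :=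
  h.imp fun _ hL => hL.congr hu hv

theorem RatioTendsto.symm {L : ℝ≥0∞} (h : RatioTendsto G u v L) (hv : ∀ᶠ s in G, 0 < v s) :
    RatioTendsto G v u L⁻¹ := by
  refine Tendsto.congr' ?_ (Filter.Tendsto.inv h)
  filter_upwards [hv] with s h2
  exact ENNReal.inv_div (Or.inl ENNReal.ofReal_ne_top) (Or.inl (by simpa using h2))

theorem HasRatioLim.symm (h : HasRatioLim G u v) (hv : ∀ᶠ s in G, 0 < v s) :
    HasRatioLim G v u :=
  let ⟨_, hL⟩ := h
  ⟨_, hL.symm hv⟩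

theorem ratioTendsto_of_tendsto {a b : ℝ} (hu : Tendsto u G (𝓝 a)) (hv : Tendsto v G (𝓝 b))
    (hab : 0 < a ∨ 0 < b) : RatioTendsto G u v (ENNReal.ofReal a / ENNReal.ofReal b) :=
  ENNReal.Tendsto.div (ENNReal.tendsto_ofReal hu) (by simpa using hab)
    (ENNReal.tendsto_ofReal hv) (Or.inl ENNReal.ofReal_ne_top)

theorem hasRatioLim_of_tendsto_div {a b : ℝ} (hz : ∀ᶠ s in G, 0 < z s)
    (hu : Tendsto (fun s => u s / z s) G (𝓝 a)) (hv : Tendsto (fun s => v s / z s) G (𝓝 b))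
    (hab : 0 < a ∨ 0 < b) : HasRatioLim G u v := by
  refine ⟨_, Tendsto.congr' ?_ (ratioTendsto_of_tendsto hu hv hab)⟩
  filter_upwards [hz] with s hs
  have h0 : ENNReal.ofReal (z s)⁻¹ ≠ 0 := by simpa using hs
  rw [div_eq_mul_inv (u s), div_eq_mul_inv (v s), ENNReal.ofReal_mul' (inv_pos.2 hs).le,
    ENNReal.ofReal_mul' (inv_pos.2 hs).le, ENNReal.mul_div_mul_right _ _ h0 ENNReal.ofReal_ne_top]

theorem RatioTendsto.mul {a b : ℝ} {L : ℝ≥0∞} (huv : RatioTendsto G u v L)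
    (hv0 : ∀ᶠ s in G, 0 < v s)
    (hg : Tendsto g G (𝓝 a)) (ha : 0 < a) (hh : Tendsto h G (𝓝 b)) (hb : 0 < b) :
    RatioTendsto G (fun s => u s * g s) (fun s => v s * h s)
      (L * (ENNReal.ofReal a / ENNReal.ofReal b)) := by
  have h1 := ratioTendsto_of_tendsto hg hh (Or.inl ha)
  have hne : ENNReal.ofReal a / ENNReal.ofReal b ≠ 0 :=
    (ENNReal.div_pos (by simpa using ha) ENNReal.ofReal_ne_top).ne'
  have hnt : ENNReal.ofReal a / ENNReal.ofReal b ≠ ⊤ :=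
    ENNReal.div_ne_top ENNReal.ofReal_ne_top (by simpa using hb)
  refine Tendsto.congr' ?_ (ENNReal.Tendsto.mul huv (Or.inr hnt) h1 (Or.inl hne))
  filter_upwards [hv0, hg.eventually (lt_mem_nhds ha), hh.eventually (lt_mem_nhds hb)]
    with s h1 h2 h3
  rw [ENNReal.ofReal_mul' h2.le, ENNReal.ofReal_mul' h3.le, ENNReal.mul_div_mul_comm
    (Or.inl (by simpa using h1)) (Or.inl ENNReal.ofReal_ne_top)]

theorem HasRatioLim.add_self (h : HasRatioLim G w v) (hv : ∀ᶠ s in G, 0 < v s)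
    (hw : ∀ᶠ s in G, 0 < w s) : HasRatioLim G (fun s => v s + w s) v := by
  obtain ⟨L, hL⟩ := h
  refine ⟨1 + L, Tendsto.congr' ?_ (tendsto_const_nhds.add hL)⟩
  filter_upwards [hv, hw] with s h1 h2
  rw [ENNReal.ofReal_add h1.le h2.le, ENNReal.add_div,
    ENNReal.div_self (by simpa using h1) ENNReal.ofReal_ne_top]

theorem hasRatioLim_zero : HasRatioLim G (fun _ => 0) v :=
  ⟨0, by simpa [RatioTendsto] using tendsto_const_nhds⟩

theorem HasRatioLim.add_of_total (h1 : HasRatioLim G v u)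
    (h2 : HasRatioLim G w (fun s => u s + v s)) (hu : ∀ᶠ s in G, 0 < u s)
    (hv : ∀ᶠ s in G, 0 ≤ v s) (hw : ∀ᶠ s in G, 0 ≤ w s) :
    HasRatioLim G (fun s => v s + w s) u := by
  obtain ⟨L, hL⟩ := h1
  obtain ⟨M, hM⟩ := h2
  by_cases hLt : L = ⊤
  · subst hLt
    refine ⟨⊤, tendsto_nhds_top_mono hL ?_⟩
    filter_upwards [hw] with s hs
    exact ENNReal.div_le_div_right (ENNReal.ofReal_le_ofReal (by linarith)) _
  · have h3 : Tendsto (fun s => 1 + ENNReal.ofReal (v s) / ENNReal.ofReal (u s)) G (𝓝 (1 + L)) :=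
      tendsto_const_nhds.add hL
    have h4 := ENNReal.Tendsto.mul hM (Or.inr (by simpa using hLt)) h3 (Or.inl (by simp))
    refine ⟨L + M * (1 + L), Tendsto.congr' ?_ (Filter.Tendsto.add hL h4)⟩
    filter_upwards [hu, hv, hw] with s hu hv hw
    have hne : ENNReal.ofReal (u s) ≠ 0 := by simpa using hu
    have hne' : ENNReal.ofReal (u s + v s) ≠ 0 := by simpa using by linarith
    rw [ENNReal.ofReal_add hv hw, ENNReal.add_div, ← ENNReal.div_self hne ENNReal.ofReal_ne_top,
      ← ENNReal.add_div, ← ENNReal.ofReal_add hu.le hv]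
    congr 1
    simp only [div_eq_mul_inv]
    rw [mul_assoc, ← mul_assoc _⁻¹, ENNReal.inv_mul_cancel hne' ENNReal.ofReal_ne_top, one_mul]

theorem sin_pi_mul_eq (a : ℝ) : sin (π * a) = a * (π * sinc (π * a)) := by
  by_cases ha : a = 0
  · simp [ha]
  · rw [sinc_of_ne_zero (mul_ne_zero pi_ne_zero ha)]
    field_simp [pi_ne_zero]

theorem tendsto_pi_mul_sinc (hu : Tendsto u G (𝓝 0)) :
    Tendsto (fun s => π * sinc (π * u s)) G (𝓝 π) := by
  have : Tendsto (fun a : ℝ => π * sinc (π * a)) (𝓝 0) (𝓝 (π * sinc (π * 0))) :=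
    (continuous_const.mul (continuous_sinc.comp (continuous_const.mul continuous_id))).tendsto 0
  rw [mul_zero, sinc_zero, mul_one] at this
  exact this.comp hu

theorem ratioTendsto_sin_iff {L : ℝ≥0∞} (hu : Tendsto u G (𝓝 0)) (hv : Tendsto v G (𝓝 0))
    (hv0 : ∀ᶠ s in G, 0 < v s) :
    RatioTendsto G (fun s => sin (π * u s)) (fun s => sin (π * v s)) L ↔
      RatioTendsto G u v L := by
  have hu1 := tendsto_pi_mul_sinc hu
  have hv1 := tendsto_pi_mul_sinc hv
  have hself : ENNReal.ofReal π / ENNReal.ofReal π = 1 :=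
    ENNReal.div_self (by simpa using pi_pos) ENNReal.ofReal_ne_top
  have hself' : ENNReal.ofReal π⁻¹ / ENNReal.ofReal π⁻¹ = 1 :=
    ENNReal.div_self (by simpa using pi_pos) ENNReal.ofReal_ne_top
  constructor
  · intro h
    have h1 := h.mul (by
      filter_upwards [hv0, hv1.eventually (lt_mem_nhds pi_pos)] with s h1 h2
      rw [sin_pi_mul_eq]; exact mul_pos h1 h2) (hu1.inv₀ pi_ne_zero) (inv_pos.2 pi_pos)
      (hv1.inv₀ pi_ne_zero) (inv_pos.2 pi_pos)
    rw [hself', mul_one] at h1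
    refine h1.congr ?_ ?_
    · filter_upwards [hu1.eventually (lt_mem_nhds pi_pos)] with s hs
      rw [sin_pi_mul_eq, mul_inv_cancel_right₀ hs.ne']
    · filter_upwards [hv1.eventually (lt_mem_nhds pi_pos)] with s hs
      rw [sin_pi_mul_eq, mul_inv_cancel_right₀ hs.ne']
  · intro h
    have h1 := h.mul hv0 hu1 pi_pos hv1 pi_pos
    rw [hself, mul_one] at h1
    exact h1.congr (.of_forall fun s => (sin_pi_mul_eq _).symm)
      (.of_forall fun s => (sin_pi_mul_eq _).symm)

theorem sin_pi_mul_pos {a : ℝ} (h0 : 0 < a) (h1 : a < 1) : 0 < sin (π * a) :=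
  sin_pos_of_pos_of_lt_pi (mul_pos pi_pos h0) (by nlinarith [pi_pos])

theorem sin_pi_mul_one_sub (a : ℝ) : sin (π * (1 - a)) = sin (π * a) := by
  rw [mul_sub, mul_one, sin_pi_sub]

theorem hasRatioLim_sin [G.NeBot] {a b c : ℝ} (hu : Tendsto u G (𝓝 a)) (hv : Tendsto v G (𝓝 b))
    (hw : Tendsto w G (𝓝 c)) (hu0 : ∀ᶠ s in G, 0 < u s) (hv0 : ∀ᶠ s in G, 0 < v s)
    (hw0 : ∀ᶠ s in G, 0 < w s) (hsum : ∀ᶠ s in G, u s + v s + w s = 1)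
    (huv : HasRatioLim G u v) (hwv : HasRatioLim G w v) (hwu : HasRatioLim G w u) :
    HasRatioLim G (fun s => sin (π * u s)) (fun s => sin (π * v s)) := by
  have ha : 0 ≤ a := ge_of_tendsto hu (hu0.mono fun _ h => h.le)
  have hb : 0 ≤ b := ge_of_tendsto hv (hv0.mono fun _ h => h.le)
  have hc : 0 ≤ c := ge_of_tendsto hw (hw0.mono fun _ h => h.le)
  have habc : a + b + c = 1 := by
    refine tendsto_nhds_unique ((hu.add hv).add hw) (tendsto_const_nhds.congr' ?_)
    filter_upwards [hsum] with s hs using hs.symm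
  have hsu : Tendsto (fun s => sin (π * u s)) G (𝓝 (sin (π * a))) :=
    ((continuous_sin.comp (continuous_const.mul continuous_id)).tendsto a).comp hu
  have hsv : Tendsto (fun s => sin (π * v s)) G (𝓝 (sin (π * b))) :=
    ((continuous_sin.comp (continuous_const.mul continuous_id)).tendsto b).comp hv
  by_cases ha' : 0 < a ∧ a < 1
  · exact ⟨_, ratioTendsto_of_tendsto hsu hsv (Or.inl (sin_pi_mul_pos ha'.1 ha'.2))⟩
  by_cases hb' : 0 < b ∧ b < 1
  · exact ⟨_, ratioTendsto_of_tendsto hsu hsv (Or.inr (sin_pi_mul_pos hb'.1 hb'.2))⟩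
  rcases ha.eq_or_lt with rfl | ha0
  · rcases hb.eq_or_lt with rfl | hb0
    · obtain ⟨L, hL⟩ := huv
      exact ⟨L, (ratioTendsto_sin_iff hu hv hv0).2 hL⟩
    · obtain rfl : b = 1 := by by_contra; exact hb' ⟨hb0, lt_of_le_of_ne (by linarith) this⟩
      obtain rfl : c = 0 := by linarith
      have hpos : ∀ᶠ s in G, 0 < u s + w s := by
        filter_upwards [hu0, hw0] with s h1 h2 using add_pos h1 h2
      obtain ⟨L, hL⟩ := (hwu.add_self hu0 hw0).symm hu0
      have hlim : Tendsto (fun s => u s + w s) G (𝓝 0) := by simpa using hu.add hw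
      refine ⟨L, ((ratioTendsto_sin_iff hu hlim hpos).2 hL).congr .rfl ?_⟩
      filter_upwards [hsum] with s hs
      rw [← sin_pi_mul_one_sub (v s), show 1 - v s = u s + w s by linarith]
  · obtain rfl : a = 1 := by by_contra; exact ha' ⟨ha0, lt_of_le_of_ne (by linarith) this⟩
    obtain rfl : b = 0 := by linarith
    obtain rfl : c = 0 := by linarith
    obtain ⟨L, hL⟩ := hwv.add_self hv0 hw0
    have hlim : Tendsto (fun s => v s + w s) G (𝓝 0) := by simpa using hv.add hw
    refine ⟨L, ((ratioTendsto_sin_iff hlim hv hv0).2 hL).congr ?_ .rfl⟩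
    filter_upwards [hsum] with s hs
    rw [← sin_pi_mul_one_sub (u s), show 1 - u s = v s + w s by linarith]

variable {N : ℕ} {S : Finset (ℕ × ℕ)} {X : ℕ → ℕ → ℕ → ℝ} {τ : ι → ℕ → ℝ}

theorem TendsToRatios.hasRatioLim_gaps (h : TendsToRatios N X G τ) {p q r : ℕ} (hpq : p < q) (hqr : q < r) (hr : r ≤ N) :
    HasRatioLim G (fun s => τ s q - τ s p) (fun s => τ s r - τ s q) := by
  refine hasRatioLim_of_tendsto_div (z := fun s => τ s r - τ s p) ?_ (h.lim hpq hqr hr)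
    (h.lim_one_sub hpq hqr hr) ?_
  · filter_upwards [h.lt] with s hs
    linarith [hs p r (hpq.trans hqr) hr]
  · by_contra! hcon
    linarith [hcon.1, hcon.2]

theorem TendsToRatios.tendsto_left (h : TendsToRatios N X G τ) (h0 : ∀ s, τ s 0 = 0)
    (h1 : ∀ s, τ s N = 1) {p : ℕ} (hp : 0 < p) (hpN : p < N) :
    Tendsto (fun s => τ s p) G (𝓝 (X 0 p N)) := by
  simpa [h0, h1] using h.lim hp hpN le_rfl

theorem TendsToRatios.exists_tendsto (h : TendsToRatios N X G τ) (h0 : ∀ s, τ s 0 = 0)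
    (h1 : ∀ s, τ s N = 1) {p : ℕ} (hpN : p < N) : ∃ a, Tendsto (fun s => τ s p) G (𝓝 a) := by
  rcases p.eq_zero_or_pos with rfl | hp
  · exact ⟨0, by simpa [h0] using tendsto_const_nhds⟩
  · exact ⟨_, h.tendsto_left h0 h1 hp hpN⟩

theorem TendsToRatios.tendsto_left_zero (hX : IsStratumPoint N S X) (h : TendsToRatios N X G τ)
    (h0 : ∀ s, τ s 0 = 0) (h1 : ∀ s, τ s N = 1) {a : ℕ} (ha : (0, a) ∈ S) (h0a : 0 < a)
    (haN : a < N) : Tendsto (fun s => τ s a) G (𝓝 0) := by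
  rw [← (hX.zero_iff h0a haN le_rfl).2 ⟨_, ha, by simp, by simp, by simpa using haN⟩]
  exact h.tendsto_left h0 h1 h0a haN

theorem TendsToRatios.tendsto_right_zero (hX : IsStratumPoint N S X) (h : TendsToRatios N X G τ)
    (h0 : ∀ s, τ s 0 = 0) (h1 : ∀ s, τ s N = 1) {b : ℕ} (hb : (b, N) ∈ S) (h0b : 0 < b)
    (hbN : b < N) : Tendsto (fun s => 1 - τ s b) G (𝓝 0) := by
  have h2 := (h.tendsto_left h0 h1 h0b hbN).const_sub 1
  rwa [(hX.one_iff h0b hbN le_rfl).2 ⟨_, hb, by simpa using hbN.le, by simpa using hbN.le,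
    by simpa using by omega⟩, sub_self] at h2

theorem TendsToRatios.hasRatioLim_cross [G.NeBot] (hS : IsBracketSystem N S)
    (hX : IsStratumPoint N S X) (h : TendsToRatios N X G τ) (h0 : ∀ s, τ s 0 = 0)
    (h1 : ∀ s, τ s N = 1)
    (hc : ∀ a b, (0, a) ∈ S → (b, N) ∈ S → 0 < a → a < b → b < N →
      HasRatioLim G (fun s => τ s a) (fun s => 1 - τ s b))
    {p q : ℕ} (hpq : p < q) (hq : q < N) :
    HasRatioLim G (fun s => τ s p) (fun s => 1 - τ s q) := by
  rcases p.eq_zero_or_pos with rfl | hp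
  · simpa only [h0] using hasRatioLim_zero
  have hup := h.tendsto_left h0 h1 hp (hpq.trans hq)
  have hvq := (h.tendsto_left h0 h1 (hp.trans hpq) hq).const_sub 1
  by_cases hcase : 0 < X 0 p N ∨ 0 < 1 - X 0 q N
  · exact ⟨_, ratioTendsto_of_tendsto hup hvq hcase⟩
  push Not at hcase
  have hx0 : X 0 p N = 0 := le_antisymm hcase.1 (hX.nonneg hp (hpq.trans hq) le_rfl)
  have hx1 : X 0 q N = 1 :=
    le_antisymm (hX.le_one (hp.trans hpq) hq le_rfl) (by linarith [hcase.2])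
  obtain ⟨a, ha, hpa, haN, hamin⟩ : ∃ a, (0, a) ∈ S ∧ p ≤ a ∧ a < N ∧
      ∀ d, (0, d) ∈ S → p ≤ d → a ≤ d := by
    have hex : ∃ a, (0, a) ∈ S ∧ p ≤ a ∧ a < N := by
      obtain ⟨⟨b1, b2⟩, hb, hb1, hb2, hb3⟩ := (hX.zero_iff hp (hpq.trans hq) le_rfl).1 hx0
      obtain rfl : b1 = 0 := by simpa using hb1.1
      exact ⟨b2, hb, hb2.2, by simpa using hb3⟩
    classical
    obtain ⟨h2, h3, h4⟩ := Nat.find_spec hex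
    refine ⟨_, h2, h3, h4, fun d hd hpd => ?_⟩
    by_contra hlt
    exact hlt (Nat.find_min' hex ⟨hd, hpd, by omega⟩)
  obtain ⟨b, hb, hbq, hb0, hbmax⟩ : ∃ b, (b, N) ∈ S ∧ b ≤ q ∧ 0 < b ∧
      ∀ d, (d, N) ∈ S → d ≤ q → d ≤ b := by
    have hex : ∃ b, (b, N) ∈ S ∧ b ≤ q ∧ 0 < b := by
      obtain ⟨⟨b1, b2⟩, hb, hb1, hb2, hb3⟩ := (hX.one_iff (hp.trans hpq) hq le_rfl).1 hx1
      obtain rfl : b2 = N := le_antisymm (hS.le _ hb) hb2.2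
      refine ⟨b1, hb, hb1.1, ?_⟩
      simp only at hb3
      omega
    classical
    obtain ⟨e, he⟩ := hex
    have h2 := Nat.findGreatest_spec (P := fun b => (b, N) ∈ S ∧ b ≤ q ∧ 0 < b) he.2.1 he
    refine ⟨_, h2.1, h2.2.1, h2.2.2, fun d hd hdq => ?_⟩
    rcases d.eq_zero_or_pos with rfl | hd0
    · exact Nat.zero_le _
    · exact Nat.le_findGreatest hdq ⟨hd, hdq, hd0⟩
  have hab : a < b := by
    have := hS.compat _ ha _ hb
    simp only at this
    omega
  obtain ⟨L₁, hL₁, hl₁⟩ := h.exists_pos_lim hX (p := 0) (i := 0) (k := p) (q := a) le_rfl hp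
    hpa haN.le (by rintro ⟨d, hd, h2, h3, h4⟩; omega)
    (by
      rintro ⟨⟨d1, d2⟩, hd, h2, h3, h4⟩
      obtain rfl : d1 = 0 := by simpa using h2.1
      have := hamin d2 hd h3.2
      simp only at h4
      omega)
  obtain ⟨L₂, hL₂, hl₂⟩ := h.exists_pos_lim hX (p := b) (i := q) (k := N) (q := N) hbq hq
    le_rfl le_rfl
    (by
      rintro ⟨⟨d1, d2⟩, hd, h2, h3, h4⟩
      obtain rfl : d2 = N := le_antisymm (hS.le _ hd) h3.2
      have := hbmax d1 hd h2.1
      simp only at h4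
      omega) (by rintro ⟨d, hd, h2, h3, h4⟩; omega)
  obtain ⟨L, hL⟩ := hc a b ha hb (by omega) hab (by omega)
  simp only [h0, h1, sub_zero] at hl₁ hl₂
  refine ⟨_, (hL.mul ?_ hl₁ hL₁ hl₂ hL₂).congr ?_ ?_⟩
  · filter_upwards [h.lt] with s hs
    linarith [hs b N (by omega) le_rfl, h1 s]
  · filter_upwards [h.lt] with s hs
    have := hs 0 a (by omega) haN.le
    rw [h0] at this
    exact mul_div_cancel₀ _ this.ne'
  · filter_upwards [h.lt] with s hs
    have := hs b N (by omega) le_rfl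
    rw [h1] at this
    exact mul_div_cancel₀ _ (by linarith)

theorem TendsToRatios.hasRatioLim_sin_sub [G.NeBot] (hS : IsBracketSystem N S)
    (hX : IsStratumPoint N S X) (h : TendsToRatios N X G τ) (h0 : ∀ s, τ s 0 = 0)
    (h1 : ∀ s, τ s N = 1)
    (hc : ∀ a b, (0, a) ∈ S → (b, N) ∈ S → 0 < a → a < b → b < N →
      HasRatioLim G (fun s => τ s a) (fun s => 1 - τ s b))
    {k l m : ℕ} (hk : k < N) (hl : l < N) (hm : m < N) (hkl : k ≠ l) (hkm : k ≠ m)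
    (hlm : l ≠ m) :
    HasRatioLim G (fun s => |sin (π * (τ s l - τ s k))|)
      (fun s => |sin (π * (τ s m - τ s k))|) := by
  set f : ℕ → ℕ → ι → ℝ := fun i j s => |sin (π * (τ s j - τ s i))| with hf
  have hsymm : ∀ i j, f i j = f j i := by
    intro i j
    ext s
    rw [hf]
    simp only
    rw [← abs_neg, ← sin_neg]
    ring_nf
  have key : ∀ p q r, p < q → q < r → r < N →
      (HasRatioLim G (f p q) (f q r) ∧ HasRatioLim G (f q r) (f p q)) ∧
      (HasRatioLim G (f p r) (f q r) ∧ HasRatioLim G (f q r) (f p r)) ∧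
      (HasRatioLim G (f p r) (f p q) ∧ HasRatioLim G (f p q) (f p r)) := by
    intro p q r hpq hqr hr
    obtain ⟨tp, htp⟩ := h.exists_tendsto h0 h1 (hpq.trans (hqr.trans hr))
    obtain ⟨tq, htq⟩ := h.exists_tendsto h0 h1 (hqr.trans hr)
    obtain ⟨tr, htr⟩ := h.exists_tendsto h0 h1 hr
    have hall : ∀ᶠ s in G, 0 ≤ τ s p ∧ τ s p < τ s q ∧ τ s q < τ s r ∧ τ s r < 1 := by
      filter_upwards [h.lt, h.le] with s hs hs'
      refine ⟨?_, hs p q hpq (by omega), hs q r hqr hr.le, ?_⟩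
      · rw [← h0 s]; exact hs' 0 p (Nat.zero_le _) (by omega)
      · rw [← h1 s]; exact hs r N hr le_rfl
    have e1 := hall.mono fun s hs => show 0 < τ s q - τ s p by linarith [hs.2.1]
    have e2 := hall.mono fun s hs => show 0 < τ s r - τ s q by linarith [hs.2.2.1]
    have e3 := hall.mono fun s hs => show 0 < 1 - τ s r + τ s p by linarith [hs.1, hs.2.2.2]
    have l1 := htq.sub htp
    have l2 := htr.sub htq
    have l3 := (htr.const_sub 1).add htp
    have r12 := h.hasRatioLim_gaps hpq hqr hr.le
    have r21 := r12.symm e2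
    have r32 : HasRatioLim G (fun s => 1 - τ s r + τ s p) (fun s => τ s r - τ s q) := by
      refine HasRatioLim.add_of_total ?_ ?_ e2 ?_ ?_
      · have := (h.hasRatioLim_gaps hqr hr le_rfl).symm
          (hall.mono fun s hs => by linarith [h1 s, hs.2.2.2])
        simpa only [h1] using this
      · refine (h.hasRatioLim_cross hS hX h0 h1 hc hpq (hqr.trans hr)).congr .rfl
          (.of_forall fun s => ?_)
        simp only
        ring
      · exact hall.mono fun s hs => by linarith [hs.2.2.2]
      · exact hall.mono fun s hs => hs.1
    have r31 : HasRatioLim G (fun s => 1 - τ s r + τ s p) (fun s => τ s q - τ s p) := by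
      have : HasRatioLim G (fun s => τ s p + (1 - τ s r)) (fun s => τ s q - τ s p) := by
        refine HasRatioLim.add_of_total ?_ ?_ e1 ?_ ?_
        · rcases p.eq_zero_or_pos with rfl | hp
          · simpa only [h0] using hasRatioLim_zero
          · have := h.hasRatioLim_gaps hp hpq (by omega)
            simpa only [h0, sub_zero] using this
        · refine ((h.hasRatioLim_cross hS hX h0 h1 hc hqr hr).symm
            (hall.mono fun s hs => by linarith [hs.2.2.2])).congr .rfl (.of_forall fun s => ?_)
          simp only
          ring
        · exact hall.mono fun s hs => hs.1
        · exact hall.mono fun s hs => by linarith [hs.2.2.2]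
      exact this.congr (.of_forall fun s => add_comm _ _) .rfl
    have r23 := r32.symm e2
    have r13 := r31.symm e1
    have f1 : (fun s => sin (π * (τ s q - τ s p))) =ᶠ[G] f p q := by
      filter_upwards [hall] with s hs
      exact (abs_of_pos (sin_pi_mul_pos (by linarith) (by linarith))).symm
    have f2 : (fun s => sin (π * (τ s r - τ s q))) =ᶠ[G] f q r := by
      filter_upwards [hall] with s hs
      exact (abs_of_pos (sin_pi_mul_pos (by linarith) (by linarith))).symm
    have f3 : (fun s => sin (π * (1 - τ s r + τ s p))) =ᶠ[G] f p r := by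
      filter_upwards [hall] with s hs
      rw [hf]
      simp only
      rw [abs_of_pos (sin_pi_mul_pos (by linarith) (by linarith)), ← sin_pi_mul_one_sub]
      ring_nf
    refine ⟨⟨(hasRatioLim_sin l1 l2 l3 e1 e2 e3 ?_ r12 r32 r31).congr f1 f2,
      (hasRatioLim_sin l2 l1 l3 e2 e1 e3 ?_ r21 r31 r32).congr f2 f1⟩,
      ⟨(hasRatioLim_sin l3 l2 l1 e3 e2 e1 ?_ r32 r12 r13).congr f3 f2,
      (hasRatioLim_sin l2 l3 l1 e2 e3 e1 ?_ r23 r13 r12).congr f2 f3⟩,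
      (hasRatioLim_sin l3 l1 l2 e3 e1 e2 ?_ r31 r21 r23).congr f3 f1,
      (hasRatioLim_sin l1 l3 l2 e1 e3 e2 ?_ r13 r23 r21).congr f1 f3⟩ <;>
    exact .of_forall fun s => by ring
  change HasRatioLim G (f k l) (f k m)
  rcases hkl.lt_or_gt with hkl | hkl <;> rcases hkm.lt_or_gt with hkm | hkm <;>
    rcases hlm.lt_or_gt with hlm | hlm
  · exact (key k l m hkl hlm hm).2.2.2
  · exact (key k m l hkm hlm hl).2.2.1
  · omega
  · rw [hsymm k m]; exact (key m k l hkm hkl hl).1.2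
  · rw [hsymm k l]; exact (key l k m hkl hkm hm).1.1
  · omega
  · rw [hsymm k l, hsymm k m]; exact (key l m k hlm hkm hk).2.1.1
  · rw [hsymm k l, hsymm k m]; exact (key m l k hlm hkl hk).2.1.2

end

/-! ### Relative speeds of the two boundary clusters -/

section
open Filter Topology
open scoped ENNReal

/-- Arrays of relative speeds: at most one entry in each row and column is neither `0` nor `∞`. -/
structure IsSpeedArray {l r : ℕ} (c : Fin l → Fin r → ℝ≥0∞) : Prop where
  row : ∀ i i' j, i < i' → c i j ≠ ⊤ → c i' j = 0
  col : ∀ i j j', j < j' → c i j ≠ 0 → c i j' = ⊤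

variable {l r : ℕ} {c : Fin l → Fin r → ℝ≥0∞}

open Classical in
/-- The order of vanishing assigned to the `i`-th left cluster. -/
noncomputable def leftOrder (c : Fin l → Fin r → ℝ≥0∞) (i : Fin l) : ℕ :=
  i + (Finset.univ.filter fun j => c i j = 0).card

open Classical in
/-- The order of vanishing assigned to the `j`-th right cluster. -/
noncomputable def rightOrder (c : Fin l → Fin r → ℝ≥0∞) (j : Fin r) : ℕ :=
  j + (Finset.univ.filter fun i => c i j = ⊤).card

theorem IsSpeedArray.leftOrder_strictMono (hc : IsSpeedArray c) : StrictMono (leftOrder c) := by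
  classical
  intro i i' h
  refine add_lt_add_of_lt_of_le h (Finset.card_le_card fun j hj => ?_)
  simp only [Finset.mem_filter, Finset.mem_univ, true_and] at hj ⊢
  exact hc.row i i' j h (by simp [hj])

theorem IsSpeedArray.rightOrder_strictMono (hc : IsSpeedArray c) : StrictMono (rightOrder c) := by
  classical
  intro j j' h
  refine add_lt_add_of_lt_of_le h (Finset.card_le_card fun i hi => ?_)
  simp only [Finset.mem_filter, Finset.mem_univ, true_and] at hi ⊢
  exact hc.col i j j' h (by simp [hi])

theorem IsSpeedArray.rightOrder_lt (hc : IsSpeedArray c) {i : Fin l} {j : Fin r}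
    (h : c i j = 0) : rightOrder c j < leftOrder c i := by
  classical
  have h1 : (Finset.univ.filter fun i' => c i' j = ⊤).card ≤ (Finset.Iio i).card := by
    refine Finset.card_le_card fun i' hi' => ?_
    simp only [Finset.mem_filter, Finset.mem_univ, true_and, Finset.mem_Iio] at hi' ⊢
    by_contra hle
    rcases (not_lt.1 hle).eq_or_lt with rfl | hlt
    · simp [h] at hi'
    · simp [hc.row i i' j hlt (by simp [h])] at hi'
  have h2 : (Finset.Iic j).card ≤ (Finset.univ.filter fun j' => c i j' = 0).card := by
    refine Finset.card_le_card fun j' hj' => ?_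
    simp only [Finset.mem_filter, Finset.mem_univ, true_and, Finset.mem_Iic] at hj' ⊢
    rcases hj'.eq_or_lt with rfl | hlt
    · exact h
    · by_contra hne
      simp [hc.col i j' j hlt hne] at h
  rw [Fin.card_Iio] at h1
  rw [Fin.card_Iic] at h2
  rw [leftOrder, rightOrder]
  omega

theorem IsSpeedArray.leftOrder_lt (hc : IsSpeedArray c) {i : Fin l} {j : Fin r}
    (h : c i j = ⊤) : leftOrder c i < rightOrder c j := by
  classical
  have h1 : (Finset.univ.filter fun j' => c i j' = 0).card ≤ (Finset.Iio j).card := by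
    refine Finset.card_le_card fun j' hj' => ?_
    simp only [Finset.mem_filter, Finset.mem_univ, true_and, Finset.mem_Iio] at hj' ⊢
    by_contra hle
    rcases (not_lt.1 hle).eq_or_lt with rfl | hlt
    · simp [h] at hj'
    · simp [hc.col i j j' hlt (by simp [h])] at hj'
  have h2 : (Finset.Iic i).card ≤ (Finset.univ.filter fun i' => c i' j = ⊤).card := by
    refine Finset.card_le_card fun i' hi' => ?_
    simp only [Finset.mem_filter, Finset.mem_univ, true_and, Finset.mem_Iic] at hi' ⊢
    rcases hi'.eq_or_lt with rfl | hlt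
    · exact h
    · by_contra hne
      simp [hc.row i' i j hlt hne] at h
  rw [Fin.card_Iio] at h1
  rw [Fin.card_Iic] at h2
  rw [leftOrder, rightOrder]
  omega

theorem IsSpeedArray.leftOrder_eq (hc : IsSpeedArray c) {i : Fin l} {j : Fin r}
    (h0 : c i j ≠ 0) (ht : c i j ≠ ⊤) : leftOrder c i = rightOrder c j := by
  classical
  have h1 : (Finset.univ.filter fun j' => c i j' = 0) = Finset.Iio j := by
    ext j'
    simp only [Finset.mem_filter, Finset.mem_univ, true_and, Finset.mem_Iio]
    refine ⟨fun hj' => ?_, fun hlt => ?_⟩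
    · by_contra hle
      rcases (not_lt.1 hle).eq_or_lt with rfl | hlt
      · exact h0 hj'
      · simp [hc.col i j j' hlt h0] at hj'
    · by_contra hne
      exact ht (hc.col i j' j hlt hne)
  have h2 : (Finset.univ.filter fun i' => c i' j = ⊤) = Finset.Iio i := by
    ext i'
    simp only [Finset.mem_filter, Finset.mem_univ, true_and, Finset.mem_Iio]
    refine ⟨fun hi' => ?_, fun hlt => ?_⟩
    · by_contra hle
      rcases (not_lt.1 hle).eq_or_lt with rfl | hlt
      · exact ht hi'
      · simp [hc.row i i' j hlt ht] at hi'
    · by_contra hne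
      exact h0 (hc.row i' i j hlt hne)
  rw [leftOrder, rightOrder, h1, h2, Fin.card_Iio, Fin.card_Iio, add_comm]

theorem IsSpeedArray.exists_coeff (hc : IsSpeedArray c) :
    ∃ κ : Fin r → ℝ, (∀ j, 0 < κ j) ∧
      ∀ i j, c i j ≠ 0 → c i j ≠ ⊤ → c i j = ENNReal.ofReal (κ j)⁻¹ := by
  have : ∀ j, ∃ κ : ℝ, 0 < κ ∧ ∀ i, c i j ≠ 0 → c i j ≠ ⊤ → c i j = ENNReal.ofReal κ⁻¹ := by
    intro j
    by_cases hex : ∃ i, c i j ≠ 0 ∧ c i j ≠ ⊤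
    · obtain ⟨i, h0, ht⟩ := hex
      refine ⟨(c i j).toReal⁻¹, inv_pos.2 (ENNReal.toReal_pos h0 ht), fun i' h0' ht' => ?_⟩
      obtain rfl : i' = i := by
        rcases lt_trichotomy i i' with h | h | h
        · exact absurd (hc.row i i' j h ht) h0'
        · exact h.symm
        · exact absurd (hc.row i' i j h ht') h0
      rw [inv_inv, ENNReal.ofReal_toReal ht]
    · exact ⟨1, one_pos, fun i h0 ht => absurd ⟨i, h0, ht⟩ hex⟩
  choose κ h1 h2 using this
  exact ⟨κ, h1, fun i j => h2 j i⟩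

/-- `a` lists the right ends of the brackets at `0` and `b` the left ends of the brackets at `N`,
in both cases from the largest bracket to the smallest one. -/
structure IsBoundaryEnum {l r : ℕ} (N : ℕ) (S : Finset (ℕ × ℕ)) (a : Fin l → ℕ) (b : Fin r → ℕ) :
    Prop where
  anti : StrictAnti a
  mono : StrictMono b
  mem_left : ∀ m, ((0, m) ∈ S ∧ m < N) ↔ m ∈ Set.range a
  mem_right : ∀ m, ((m, N) ∈ S ∧ 0 < m) ↔ m ∈ Set.range b

variable {ι : Type*} {G : Filter ι} {N : ℕ} {S : Finset (ℕ × ℕ)} {X : ℕ → ℕ → ℕ → ℝ}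
  {τ : ι → ℕ → ℝ} {a : Fin l → ℕ} {b : Fin r → ℕ} {u v w : ι → ℝ}

theorem IsBoundaryEnum.left (hab : IsBoundaryEnum N S a b) (i : Fin l) :
    (0, a i) ∈ S ∧ a i < N := (hab.mem_left _).2 ⟨i, rfl⟩

theorem IsBoundaryEnum.right (hab : IsBoundaryEnum N S a b) (j : Fin r) :
    (b j, N) ∈ S ∧ 0 < b j := (hab.mem_right _).2 ⟨j, rfl⟩

theorem RatioTendsto.trans {L M : ℝ≥0∞} (h1 : RatioTendsto G u v L) (h2 : RatioTendsto G v w M)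
    (hv : ∀ᶠ s in G, 0 < v s) (hLM : L ≠ 0 ∨ M ≠ ⊤) (hML : M ≠ 0 ∨ L ≠ ⊤) :
    RatioTendsto G u w (L * M) := by
  refine Tendsto.congr' ?_ (ENNReal.Tendsto.mul h1 hLM h2 hML)
  filter_upwards [hv] with s hs
  simp only [div_eq_mul_inv]
  rw [mul_assoc, ← mul_assoc _⁻¹,
    ENNReal.inv_mul_cancel (by simpa using hs) ENNReal.ofReal_ne_top, one_mul]

theorem ratioTendsto_of_tendsto_div {L : ℝ} (h : Tendsto (fun s => u s / v s) G (𝓝 L))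
    (hv : ∀ᶠ s in G, 0 < v s) : RatioTendsto G u v (ENNReal.ofReal L) := by
  refine Tendsto.congr' ?_ (ENNReal.tendsto_ofReal h)
  filter_upwards [hv] with s hs
  exact ENNReal.ofReal_div_of_pos hs

/-- The relative speeds of the boundary clusters of a degenerating configuration. -/
theorem TendsToRatios.isSpeedArray [G.NeBot] (hS : IsBracketSystem N S)
    (hX : IsStratumPoint N S X) (h : TendsToRatios N X G τ) (h0 : ∀ s, τ s 0 = 0)
    (h1 : ∀ s, τ s N = 1) (hab : IsBoundaryEnum N S a b)
    (hc : ∀ i j, RatioTendsto G (fun s => τ s (a i)) (fun s => 1 - τ s (b j)) (c i j)) :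
    IsSpeedArray c := by
  have ha0 : ∀ i, 0 < a i := fun i => hS.lt _ (hab.left i).1
  have hbN : ∀ j, b j < N := fun j => hS.lt _ (hab.right j).1
  have hapos : ∀ i, ∀ᶠ s in G, 0 < τ s (a i) := fun i => by
    filter_upwards [h.lt] with s hs
    rw [← h0 s]
    exact hs 0 (a i) (ha0 i) (hab.left i).2.le
  have hbpos : ∀ j, ∀ᶠ s in G, 0 < 1 - τ s (b j) := fun j => by
    filter_upwards [h.lt] with s hs
    rw [← h1 s]
    exact sub_pos.2 (hs (b j) N (hbN j) le_rfl)
  constructor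
  · intro i i' j hi hne
    have hlt := hab.anti hi
    have h2 := h.tendsto_zero hX (hab.left i').1 (i := 0) (i' := 0) (k' := a i') (k := a i)
      le_rfl le_rfl (ha0 i') le_rfl hlt.le (hab.left i).2.le (by simpa using hlt)
    simp only [h0, sub_zero] at h2
    have h3 := (ratioTendsto_of_tendsto_div h2 (hapos i)).trans (hc i j) (hapos i)
      (Or.inr hne) (Or.inr ENNReal.ofReal_ne_top)
    rw [ENNReal.ofReal_zero, zero_mul] at h3
    exact tendsto_nhds_unique (hc i' j) h3
  · intro i j j' hj hne
    have hlt := hab.mono hj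
    have h2 := h.tendsto_zero hX (hab.right j').1 (i := b j) (i' := b j') (k' := N) (k := N)
      hlt.le le_rfl (hbN j') le_rfl le_rfl le_rfl (by simpa using hlt)
    simp only [h1] at h2
    have h3 := (ratioTendsto_of_tendsto_div h2 (hbpos j)).symm (hbpos j)
    rw [ENNReal.ofReal_zero, ENNReal.inv_zero] at h3
    have h4 := (hc i j).trans h3 (hbpos j) (Or.inl hne) (Or.inl ENNReal.top_ne_zero)
    rw [ENNReal.mul_top hne] at h4
    exact tendsto_nhds_unique (hc i j') h4

theorem tendsto_mul_pow_div_zero {k k' : ℝ} {e e' : ℕ} (he : e' < e) :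
    Tendsto (fun s : ι × ℝ => k * s.2 ^ e / (k' * s.2 ^ e')) (G ×ˢ 𝓝[>] 0) (𝓝 0) := by
  have h1 : Tendsto (fun x : ℝ => k / k' * x ^ (e - e')) (𝓝[>] 0) (𝓝 0) := by
    have : Tendsto (fun x : ℝ => k / k' * x ^ (e - e')) (𝓝 0) (𝓝 (k / k' * 0 ^ (e - e'))) :=
      (continuous_const.mul (continuous_id.pow _)).tendsto 0
    rw [zero_pow (by omega), mul_zero] at this
    exact this.mono_left nhdsWithin_le_nhds
  refine (h1.comp tendsto_snd).congr' ?_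
  have : ∀ᶠ s : ι × ℝ in G ×ˢ 𝓝[>] 0, s.2 ∈ Set.Ioi 0 :=
    tendsto_snd.eventually self_mem_nhdsWithin
  filter_upwards [this] with s hs
  have hs' : (s.2 : ℝ) ≠ 0 := (Set.mem_Ioi.1 hs).ne'
  simp only [Function.comp_apply]
  rw [mul_div_mul_comm, pow_sub₀ _ hs' he.le, div_eq_mul_inv (s.2 ^ e)]

/-- Every array of relative speeds is realized by a degenerating configuration. -/
theorem TendsToRatios.exists_of_isSpeedArray (hS : IsBracketSystem N S)
    (hX : IsStratumPoint N S X) (h : TendsToRatios N X G τ) (hab : IsBoundaryEnum N S a b)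
    (hc : IsSpeedArray c) :
    ∃ τ' : ι × ℝ → ℕ → ℝ, TendsToRatios N X (G ×ˢ 𝓝[>] 0) τ' ∧
      (∀ᶠ s in G ×ˢ 𝓝[>] 0, τ' s 0 = 0 ∧ τ' s N = 1) ∧
      ∀ i j, RatioTendsto (G ×ˢ 𝓝[>] 0) (fun s => τ' s (a i)) (fun s => 1 - τ' s (b j)) (c i j) := by
  obtain ⟨κ, hκ, hκc⟩ := hc.exists_coeff
  have h0N : 0 < N := hS.lt _ hS.root
  have ha0 : ∀ i, 0 < a i := fun i => hS.lt _ (hab.left i).1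
  have hbN : ∀ j, b j < N := fun j => hS.lt _ (hab.right j).1
  have hNa : ¬ ∃ i, a i = N := by rintro ⟨i, hi⟩; exact (hab.left i).2.ne hi
  set e : ℕ × ℕ → ℕ := fun d => if d.1 = 0 then
    Function.extend a (fun i => leftOrder c i + 1) 0 d.2 else
    Function.extend b (fun j => rightOrder c j + 1) 0 d.1 with he
  set k : ℕ × ℕ → ℝ := fun d => if d.1 = 0 then 1 else Function.extend b κ 1 d.1 with hk
  have heL : ∀ i, e (0, a i) = leftOrder c i + 1 := fun i => by
    simp [he, hab.anti.injective.extend_apply]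
  have heR : ∀ j, e (b j, N) = rightOrder c j + 1 := fun j => by
    simp [he, hab.mono.injective.extend_apply, (hab.right j).2.ne']
  have he0 : e (0, N) = 0 := by simp [he, Function.extend_apply' _ _ _ hNa]
  have hkL : ∀ m, k (0, m) = 1 := fun m => by simp [hk]
  have hkR : ∀ j, k (b j, N) = κ j := fun j => by
    simp [hk, hab.mono.injective.extend_apply, (hab.right j).2.ne']
  have hkpos : ∀ d, 0 < k d := by
    intro d
    simp only [hk]
    split_ifs
    · exact one_pos
    · by_cases hd : ∃ j, b j = d.1
      · obtain ⟨j, hj⟩ := hd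
        rw [← hj, hab.mono.injective.extend_apply]
        exact hκ j
      · rw [Function.extend_apply' _ _ _ hd]
        exact one_pos
  have hδ : ∀ᶠ s : ι × ℝ in G ×ˢ 𝓝[>] 0, 0 < s.2 :=
    tendsto_snd.eventually (self_mem_nhdsWithin (s := Set.Ioi (0 : ℝ)))
  set Λ : ℕ × ℕ → ι × ℝ → ℝ := fun d s => k d * s.2 ^ e d with hΛ
  have hΛpos : ∀ d, ∀ᶠ s in G ×ˢ 𝓝[>] 0, 0 < Λ d s := fun d => by
    filter_upwards [hδ] with s hs
    exact mul_pos (hkpos d) (pow_pos hs _)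
  have h' : TendsToRatios N X (G ×ˢ 𝓝[>] (0 : ℝ)) (fun s => τ s.1) :=
    ⟨tendsto_fst.eventually h.lt, fun hij hjk hk => (h.lim hij hjk hk).comp tendsto_fst⟩
  obtain ⟨σ, hσ, hσΛ⟩ := exists_tendsToRatios_of_scales hS hX h' Λ hΛpos
    (by ext s; simp [hΛ, he0, hkL]) _ (S.filter fun d => d.1 = 0 ∨ d.2 = N) le_rfl
    (Finset.filter_subset _ _) (Finset.mem_filter.2 ⟨hS.root, Or.inl rfl⟩)
    (by
      intro d hd d' hd' h1 h2
      refine Finset.mem_filter.2 ⟨hd', ?_⟩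
      have := (Finset.mem_filter.1 hd).2
      have := hS.le d' hd'
      omega)
    (by
      rintro ⟨d1, d2⟩ hd ⟨d1', d2'⟩ hd' h1 h2 hne
      refine tendsto_mul_pow_div_zero ?_
      obtain ⟨hdS, hd⟩ := Finset.mem_filter.1 hd
      obtain ⟨hdS', hd'⟩ := Finset.mem_filter.1 hd'
      have hle := hS.le _ hdS
      have hle' := hS.le _ hdS'
      simp only at h1 h2 hd hd' hle hle'
      have hne' : ¬ (d1 = d1' ∧ d2 = d2') := fun hh => hne (by rw [hh.1, hh.2])
      by_cases hd0 : d1 = 0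
      · obtain rfl : d1' = 0 := by omega
        subst hd0
        obtain ⟨i, rfl⟩ := (hab.mem_left d2).1 ⟨hdS, by omega⟩
        rw [heL]
        by_cases hN : d2' = N
        · subst hN
          rw [he0]
          omega
        · obtain ⟨i', rfl⟩ := (hab.mem_left d2').1 ⟨hdS', by omega⟩
          rw [heL, add_lt_add_iff_right]
          exact hc.leftOrder_strictMono (hab.anti.lt_iff_gt.1 (by omega))
      · obtain rfl : d2 = N := by omega
        obtain rfl : d2' = d2 := by omega
        obtain ⟨j, rfl⟩ := (hab.mem_right d1).1 ⟨hdS, by omega⟩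
        rw [heR]
        by_cases hd0' : d1' = 0
        · subst hd0'
          rw [he0]
          omega
        · obtain ⟨j', rfl⟩ := (hab.mem_right d1').1 ⟨hdS', by omega⟩
          rw [heR, add_lt_add_iff_right]
          exact hc.rightOrder_strictMono (hab.mono.lt_iff_lt.1 (by omega)))
  have hσ0 : ∀ᶠ s in G ×ˢ 𝓝[>] 0, 0 < σ s N - σ s 0 := by
    filter_upwards [hσ.lt] with s hs
    exact sub_pos.2 (hs 0 N h0N le_rfl)
  refine ⟨fun s p => (σ s p - σ s 0) / (σ s N - σ s 0), ⟨?_, ?_⟩, ?_, ?_⟩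
  · filter_upwards [hσ.lt, hσ0] with s hs hs0 i k hik hk
    exact div_lt_div_of_pos_right (by linarith [hs i k hik hk]) hs0
  · intro i j k hij hjk hk
    refine (hσ.lim hij hjk hk).congr' ?_
    filter_upwards [hσ0] with s hs0
    rw [← sub_div, ← sub_div, div_div_div_cancel_right₀ hs0.ne', sub_sub_sub_cancel_right,
      sub_sub_sub_cancel_right]
  · filter_upwards [hσ0] with s hs0
    exact ⟨by simp, div_self hs0.ne'⟩
  · intro i j
    have hL := hσΛ (0, a i) (Finset.mem_filter.2 ⟨(hab.left i).1, Or.inl rfl⟩)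
    have hR := hσΛ (b j, N) (Finset.mem_filter.2 ⟨(hab.right j).1, Or.inr rfl⟩)
    have hscale : RatioTendsto (G ×ˢ 𝓝[>] 0) (Λ (0, a i)) (Λ (b j, N)) (c i j) := by
      by_cases hc0 : c i j = 0
      · rw [hc0, ← ENNReal.ofReal_zero]
        refine ratioTendsto_of_tendsto_div (tendsto_mul_pow_div_zero ?_) (hΛpos _)
        rw [heL, heR, add_lt_add_iff_right]
        exact hc.rightOrder_lt hc0
      by_cases hct : c i j = ⊤
      · rw [hct, ← ENNReal.inv_zero, ← ENNReal.ofReal_zero]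
        refine (ratioTendsto_of_tendsto_div (tendsto_mul_pow_div_zero ?_) (hΛpos _)).symm
          (hΛpos _)
        rw [heL, heR, add_lt_add_iff_right]
        exact hc.leftOrder_lt hct
      rw [hκc i j hc0 hct]
      refine ratioTendsto_of_tendsto_div (tendsto_const_nhds.congr' ?_) (hΛpos _)
      filter_upwards [hδ] with s hs
      simp only [hΛ]
      rw [heL, heR, hc.leftOrder_eq hc0 hct, hkL, hkR, mul_div_mul_right _ _ (pow_pos hs _).ne',
        one_div]
    have := hscale.mul (hΛpos _) hL one_pos hR one_pos
    rw [ENNReal.div_self (by simp) (by simp), mul_one] at this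
    refine this.congr ?_ ?_
    · filter_upwards [hΛpos (0, a i)] with s hs
      rw [← div_div, ← mul_div_assoc, mul_div_cancel₀ _ hs.ne']
    · filter_upwards [hΛpos (b j, N), hσ0] with s hs hs0
      rw [mul_div_assoc', mul_div_mul_left _ _ hs.ne', eq_sub_iff_add_eq, ← add_div,
        sub_add_sub_cancel, div_self hs0.ne']

end

/-! ### The fiber of the projection -/

section
open Filter Topology
open scoped ENNReal

variable {n : ℕ}

/-- The points `t 0 = 0, t 1, …, t n, t (n + 1) = 1`, indexed by natural numbers. -/
noncomputable def extNat (t : Fin n → ℝ) (p : ℕ) : ℝ :=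
  if h : p < n + 2 then ext01 t ⟨p, h⟩ else 0

theorem extNat_zero (t : Fin n → ℝ) : extNat t 0 = 0 := by
  rw [extNat, dif_pos (by omega)]
  rfl

theorem extNat_last (t : Fin n → ℝ) : extNat t (n + 1) = 1 := by
  rw [extNat, dif_pos (by omega)]
  have : (⟨n + 1, by omega⟩ : Fin (n + 2)) = Fin.succ (Fin.last n) := rfl
  rw [this, ext01, Fin.cons_succ, Fin.snoc_last]

theorem extNat_succ (t : Fin n → ℝ) (p : Fin n) : extNat t (p + 1) = t p := by
  rw [extNat, dif_pos (by omega)]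
  have : (⟨p + 1, by omega⟩ : Fin (n + 2)) = Fin.succ (Fin.castSucc p) := rfl
  rw [this, ext01, Fin.cons_succ, Fin.snoc_castSucc]

theorem ext01_eq_extNat (t : Fin n → ℝ) (p : Fin (n + 2)) : ext01 t p = extNat t p := by
  rw [extNat, dif_pos p.2]

theorem ext0_eq_extNat (t : Fin n → ℝ) (p : Fin (n + 1)) : ext0 t p = extNat t p := by
  refine Fin.cases ?_ (fun q => ?_) p
  · exact (extNat_zero t).symm
  · rw [ext0, Fin.cons_succ, Fin.val_succ, extNat_succ]

theorem mem_openSimplex_iff {t : Fin n → ℝ} :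
    t ∈ openSimplex n ↔ ∀ i k, i < k → k ≤ n + 1 → extNat t i < extNat t k := by
  constructor
  · rintro ⟨h1, h2, h3⟩ i k hik hk
    rcases Nat.eq_zero_or_eq_succ_pred i with hi | hi
    · subst hi
      rw [extNat_zero]
      rcases hk.eq_or_lt with rfl | hk
      · rw [extNat_last]; exact one_pos
      · have := extNat_succ t ⟨k - 1, by omega⟩
        simp only [show k - 1 + 1 = k by omega] at this
        rw [this]; exact h2 _
    · have hi' := extNat_succ t ⟨i - 1, by omega⟩
      simp only [show i - 1 + 1 = i by omega] at hi'
      rw [hi']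
      rcases hk.eq_or_lt with rfl | hk
      · rw [extNat_last]; exact h3 _
      · have := extNat_succ t ⟨k - 1, by omega⟩
        simp only [show k - 1 + 1 = k by omega] at this
        rw [this]
        exact h1 _ _ (Fin.mk_lt_mk.2 (by omega))
  · intro h
    refine ⟨fun i j hij => ?_, fun i => ?_, fun i => ?_⟩
    · rw [← extNat_succ t i, ← extNat_succ t j]
      exact h _ _ (by simpa using hij) (by omega)
    · rw [← extNat_succ t i, ← extNat_zero t]
      exact h _ _ (by omega) (by omega)
    · rw [← extNat_succ t i, ← extNat_last t]
      exact h _ _ (by omega) (by omega)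

/-- The coordinates of a point of the associahedron, indexed by natural numbers. -/
noncomputable def ratioNat (x : TriIdx n → ℝ) (i j k : ℕ) : ℝ :=
  if h : i < j ∧ j < k ∧ k < n + 2 then
    x ⟨(⟨i, h.1.trans (h.2.1.trans h.2.2)⟩, ⟨j, h.2.1.trans h.2.2⟩, ⟨k, h.2.2⟩), h.1, h.2.1⟩
  else 0

theorem ratioNat_eq (x : TriIdx n → ℝ) (q : TriIdx n) :
    ratioNat x q.1.1 q.1.2.1 q.1.2.2 = x q := by
  rw [ratioNat, dif_pos ⟨q.2.1, q.2.2, q.1.2.2.2⟩]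

theorem tendsToRatios_extNat_iff {x : TriIdx n → ℝ} {H : Filter (Fin n → ℝ)} :
    TendsToRatios (n + 1) (ratioNat x) H extNat ↔
      openSimplex n ∈ H ∧ Tendsto (alphaMap n) H (𝓝 x) := by
  have hα : ∀ (t : Fin n → ℝ) (q : TriIdx n), alphaMap n t q =
      (extNat t q.1.2.1 - extNat t q.1.1) / (extNat t q.1.2.2 - extNat t q.1.1) := by
    intro t q
    simp only [alphaMap, ext01_eq_extNat]
  constructor
  · intro h
    refine ⟨?_, tendsto_pi_nhds.2 fun q => ?_⟩
    · filter_upwards [h.lt] with t ht using mem_openSimplex_iff.2 ht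
    · simp only [hα]
      rw [← ratioNat_eq x q]
      exact h.lim q.2.1 q.2.2 (by omega)
  · rintro ⟨h1, h2⟩
    refine ⟨?_, fun {i j k} hij hjk hk => ?_⟩
    · filter_upwards [h1] with t ht using mem_openSimplex_iff.1 ht
    · have h3 := tendsto_pi_nhds.1 h2 ⟨(⟨i, by omega⟩, ⟨j, by omega⟩, ⟨k, by omega⟩),
        Fin.mk_lt_mk.2 hij, Fin.mk_lt_mk.2 hjk⟩
      simp only [hα] at h3
      rwa [← ratioNat_eq x] at h3

/-- The brackets of a `Ψ`-tree, together with the full interval. -/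
noncomputable def natBrackets {m : ℕ} (S : Psi m) : Finset (ℕ × ℕ) :=
  insert (0, m) (S.1.image Subtype.val)

theorem isBracketSystem_natBrackets {m : ℕ} (hm : 0 < m) (S : Psi m) :
    IsBracketSystem m (natBrackets S) := by
  refine ⟨?_, ?_, Finset.mem_insert_self _ _, ?_⟩
  · intro b hb
    simp only [natBrackets, Finset.mem_insert, Finset.mem_image] at hb
    rcases hb with rfl | ⟨b, -, rfl⟩
    · exact hm
    · exact b.2.1
  · intro b hb
    simp only [natBrackets, Finset.mem_insert, Finset.mem_image] at hb
    rcases hb with rfl | ⟨b, -, rfl⟩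
    · exact le_rfl
    · exact b.2.2.1
  · intro b hb c hc
    simp only [natBrackets, Finset.mem_insert, Finset.mem_image] at hb hc
    rcases hb with rfl | ⟨b, hb, rfl⟩
    · rcases hc with rfl | ⟨c, -, rfl⟩
      · simp
      · exact Or.inr (Or.inr (Or.inr ⟨Nat.zero_le _, c.2.2.1⟩))
    · rcases hc with rfl | ⟨c, hc, rfl⟩
      · exact Or.inr (Or.inr (Or.inl ⟨Nat.zero_le _, b.2.2.1⟩))
      · rcases S.2 b hb c hc with h | h | h
        · by_contra hcon
          refine Set.disjoint_left.1 h (?_ : max b.1.1 c.1.1 ∈ PsiBracket.leaves b) ?_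
          · rw [PsiBracket.leaves, Set.mem_Icc]
            have := b.2.1
            omega
          · rw [PsiBracket.leaves, Set.mem_Icc]
            have := c.2.1
            omega
        · exact Or.inr (Or.inr (Or.inl ((Set.Icc_subset_Icc_iff b.2.1.le).1 h)))
        · exact Or.inr (Or.inr (Or.inr ((Set.Icc_subset_Icc_iff c.2.1.le).1 h)))

theorem closer_natBrackets_iff {m : ℕ} (S : Psi m) {i j k : ℕ} (hk : k ≤ m) :
    Closer (natBrackets S) i j k ↔ PsiCloser S i j k := by
  constructor
  · rintro ⟨b, hb, h1, h2, h3⟩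
    simp only [natBrackets, Finset.mem_insert, Finset.mem_image] at hb
    rcases hb with rfl | ⟨b, hb, rfl⟩
    · exact absurd ⟨Nat.zero_le _, hk⟩ h3
    · exact ⟨b, hb, h1, h2, h3⟩
  · rintro ⟨b, hb, h1, h2, h3⟩
    exact ⟨b.1, Finset.mem_insert_of_mem (Finset.mem_image_of_mem _ hb), h1, h2, h3⟩

theorem neBot_comap_inf_of_mem_closure {α β : Type*} [TopologicalSpace β] {f : α → β} {s : Set α}
    {y : β} (hy : y ∈ closure (f '' s)) : (comap f (𝓝 y) ⊓ 𝓟 s).NeBot := by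
  rw [mem_closure_iff_clusterPt, ClusterPt, ← map_principal] at hy
  rw [inf_comm]
  exact neBot_inf_comap_iff_map.2 (by rwa [inf_comm])

theorem isStratumPoint_ratioNat {S : Psi (n + 1)} {x : TriIdx n → ℝ} (hx : x ∈ openStratum n S) :
    IsStratumPoint (n + 1) (natBrackets S) (ratioNat x) := by
  have : (comap (alphaMap n) (𝓝 x) ⊓ 𝓟 (openSimplex n)).NeBot :=
    neBot_comap_inf_of_mem_closure hx.1
  have h : TendsToRatios (n + 1) (ratioNat x)
      (comap (alphaMap n) (𝓝 x) ⊓ 𝓟 (openSimplex n)) extNat :=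
    tendsToRatios_extNat_iff.2 ⟨mem_inf_of_right (mem_principal_self _),
      tendsto_comap.mono_left inf_le_left⟩
  refine ⟨fun {i j k} hij hjk hk => ?_, fun {i j k} hij hjk hk => ?_,
    fun {i j k} hij hjk hk => ?_, fun {i j k} hij hjk hk => ?_⟩
  · refine ge_of_tendsto (h.lim hij hjk hk) ?_
    filter_upwards [h.lt] with t ht
    exact div_nonneg (by linarith [ht i j hij (by omega)]) (by linarith [ht i k (by omega) hk])
  · refine le_of_tendsto (h.lim hij hjk hk) ?_
    filter_upwards [h.lt] with t ht
    exact div_le_one_of_le₀ (by linarith [ht j k hjk hk]) (by linarith [ht i k (by omega) hk])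
  · rw [closer_natBrackets_iff S hk]
    have := (hx.2 ⟨(⟨i, by omega⟩, ⟨j, by omega⟩, ⟨k, by omega⟩),
      Fin.mk_lt_mk.2 hij, Fin.mk_lt_mk.2 hjk⟩).1
    rwa [← ratioNat_eq x] at this
  · rw [closer_natBrackets_iff S (by omega)]
    have := (hx.2 ⟨(⟨i, by omega⟩, ⟨j, by omega⟩, ⟨k, by omega⟩),
      Fin.mk_lt_mk.2 hij, Fin.mk_lt_mk.2 hjk⟩).2
    rwa [← ratioNat_eq x] at this

theorem exists_isBoundaryEnum (S : Psi (n + 1)) {l r : ℕ}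
    (hl : (S.1.filter fun b => b.1.1 = 0).card = l)
    (hr : (S.1.filter fun b => b.1.2 = n + 1).card = r) :
    ∃ (a : Fin l → ℕ) (b : Fin r → ℕ), IsBoundaryEnum (n + 1) (natBrackets S) a b := by
  set A := (S.1.filter fun b => b.1.1 = 0).image fun b => b.1.2 with hA
  set B := (S.1.filter fun b => b.1.2 = n + 1).image fun b => b.1.1 with hB
  have hAc : A.card = l := by
    rw [hA, Finset.card_image_of_injOn, hl]
    intro b hb c hc hbc
    have hb := (Finset.mem_filter.1 hb).2
    have hc := (Finset.mem_filter.1 hc).2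
    exact Subtype.ext (Prod.ext (hb.trans hc.symm) hbc)
  have hBc : B.card = r := by
    rw [hB, Finset.card_image_of_injOn, hr]
    intro b hb c hc hbc
    have hb := (Finset.mem_filter.1 hb).2
    have hc := (Finset.mem_filter.1 hc).2
    exact Subtype.ext (Prod.ext hbc (hb.trans hc.symm))
  refine ⟨fun i => A.orderEmbOfFin hAc i.rev, B.orderEmbOfFin hBc,
    fun i j hij => (A.orderEmbOfFin hAc).strictMono (Fin.rev_lt_rev.2 hij),
    (B.orderEmbOfFin hBc).strictMono, fun m => ?_, fun m => ?_⟩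
  · have : Set.range (fun i : Fin l => A.orderEmbOfFin hAc i.rev) = ↑A := by
      rw [← Finset.range_orderEmbOfFin A hAc]
      exact Fin.rev_surjective.range_comp _
    rw [this, Finset.mem_coe, hA]
    simp only [natBrackets, Finset.mem_insert, Finset.mem_image, Finset.mem_filter]
    constructor
    · rintro ⟨h | ⟨b, hb, h⟩, hm⟩
      · have := congrArg Prod.snd h
        simp only at this
        omega
      · exact ⟨b, ⟨hb, by rw [h]⟩, by rw [h]⟩
    · rintro ⟨b, ⟨hb, h0⟩, rfl⟩
      refine ⟨Or.inr ⟨b, hb, Prod.ext h0 rfl⟩, lt_of_le_of_ne b.2.2.1 fun h => b.2.2.2 ⟨h0, h⟩⟩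
  · rw [Finset.range_orderEmbOfFin B hBc, Finset.mem_coe, hB]
    simp only [natBrackets, Finset.mem_insert, Finset.mem_image, Finset.mem_filter]
    constructor
    · rintro ⟨h | ⟨b, hb, h⟩, hm⟩
      · have := congrArg Prod.fst h
        simp only at this
        omega
      · exact ⟨b, ⟨hb, by rw [h]⟩, by rw [h]⟩
    · rintro ⟨b, ⟨hb, h0⟩, rfl⟩
      exact ⟨Or.inr ⟨b, hb, Prod.ext rfl h0⟩,
        Nat.pos_of_ne_zero fun h => b.2.2.2 ⟨h, h0⟩⟩

theorem isCompact_Cycl (n : ℕ) : IsCompact (Cycl n) := by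
  refine IsCompact.of_isClosed_subset
    ((isCompact_univ_pi fun _ : Fin n => isCompact_Icc (a := (0 : ℝ)) (b := 1)).prod
      (isCompact_univ (X := TripleIdx n → ℝ≥0∞))) isClosed_closure ?_
  refine closure_minimal ?_
    ((isClosed_set_pi fun _ _ => isClosed_Icc).prod isClosed_univ)
  rintro _ ⟨t, ht, rfl⟩
  exact ⟨fun i _ => ⟨(ht.2.1 i).le, (ht.2.2 i).le⟩, Set.mem_univ _⟩

theorem tendsto_alphaMap_of_tendsto_betaMap {piN : ↥(Cycl n) → ↥(Assoc n)}
    (hcont : Continuous piN)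
    (hcomm : ∀ t (ht : t ∈ openSimplex n),
      piN ⟨betaMap n t, subset_closure (Set.mem_image_of_mem _ ht)⟩ =
        ⟨alphaMap n t, subset_closure (Set.mem_image_of_mem _ ht)⟩)
    {y : ↥(Cycl n)} {H : Filter (Fin n → ℝ)} (hH : openSimplex n ∈ H)
    (hβ : Tendsto (betaMap n) H (𝓝 y.1)) : Tendsto (alphaMap n) H (𝓝 (piN y).1) := by
  classical
  set f : (Fin n → ℝ) → ↥(Cycl n) := fun t =>
    if ht : t ∈ openSimplex n then ⟨betaMap n t, subset_closure (Set.mem_image_of_mem _ ht)⟩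
    else y with hf
  have h1 : Tendsto f H (𝓝 y) := by
    rw [tendsto_subtype_rng]
    refine hβ.congr' ?_
    filter_upwards [hH] with t ht
    simp only [hf, dif_pos ht]
  have h2 := ((continuous_subtype_val.comp hcont).tendsto y).comp h1
  refine h2.congr' ?_
  filter_upwards [hH] with t ht
  simp only [hf, Function.comp_apply, dif_pos ht, hcomm t ht]

theorem sTilde_eq (t : Fin n → ℝ) (q : TripleIdx n) : sTilde n t q =
    ENNReal.ofReal |Real.sin (Real.pi * (extNat t q.1.2.1 - extNat t q.1.1))| /
      ENNReal.ofReal |Real.sin (Real.pi * (extNat t q.1.2.2 - extNat t q.1.1))| := by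
  simp only [sTilde, ext0_eq_extNat]

theorem tendsto_sTilde_iff {S : Finset (ℕ × ℕ)} {X : ℕ → ℕ → ℕ → ℝ} {H : Filter (Fin n → ℝ)}
    (hX : IsStratumPoint (n + 1) S X) (h : TendsToRatios (n + 1) X H extNat) {q : TripleIdx n}
    (hq0 : q.1.1 = 0) (ha : (0, q.1.2.1.1) ∈ S) (hb : (q.1.2.2.1, n + 1) ∈ S) {L : ℝ≥0∞} :
    Tendsto (fun t => sTilde n t q) H (𝓝 L) ↔
      RatioTendsto H (fun t => extNat t q.1.2.1) (fun t => 1 - extNat t q.1.2.2) L := by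
  have ha0 : 0 < q.1.2.1.1 := Nat.pos_of_ne_zero fun h => q.2.1 (hq0.trans (Fin.ext h.symm))
  have hb0 : 0 < q.1.2.2.1 := Nat.pos_of_ne_zero fun h => q.2.2.1 (hq0.trans (Fin.ext h.symm))
  have hbpos : ∀ᶠ t in H, 0 < 1 - extNat t q.1.2.2 := by
    filter_upwards [h.lt] with t ht
    rw [← extNat_last t]
    exact sub_pos.2 (ht _ _ q.1.2.2.2 le_rfl)
  rw [← ratioTendsto_sin_iff
    (h.tendsto_left_zero hX extNat_zero extNat_last ha ha0 q.1.2.1.2)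
    (h.tendsto_right_zero hX extNat_zero extNat_last hb hb0 q.1.2.2.2) hbpos]
  refine tendsto_congr' ?_
  filter_upwards [h.lt] with t ht
  have h1 := ht 0 q.1.2.1 ha0 q.1.2.1.2.le
  have h2 := ht q.1.2.1 (n + 1) q.1.2.1.2 le_rfl
  have h3 := ht 0 q.1.2.2 hb0 q.1.2.2.2.le
  have h4 := ht q.1.2.2 (n + 1) q.1.2.2.2 le_rfl
  rw [extNat_zero] at h1 h3
  rw [extNat_last] at h2 h4
  rw [sTilde_eq, sin_pi_mul_one_sub, hq0, Fin.val_zero, extNat_zero, sub_zero, sub_zero,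
    abs_of_pos (sin_pi_mul_pos h1 h2), abs_of_pos (sin_pi_mul_pos h3 h4)]

/-- The increasing homeomorphism of `[0, ∞]` onto `[-1, 1]`. -/
noncomputable def signedUnit (z : ℝ≥0∞) : ℝ :=
  2 * (ENNReal.orderIsoUnitIntervalBirational z : ℝ) - 1

theorem continuous_signedUnit : Continuous signedUnit :=
  (continuous_const.mul (continuous_subtype_val.comp
    ENNReal.orderIsoUnitIntervalBirational.continuous)).sub continuous_const

theorem signedUnit_strictMono : StrictMono signedUnit := fun x y h => by
  have : ENNReal.orderIsoUnitIntervalBirational x < ENNReal.orderIsoUnitIntervalBirational y :=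
    ENNReal.orderIsoUnitIntervalBirational.strictMono h
  have : (ENNReal.orderIsoUnitIntervalBirational x : ℝ) <
    ENNReal.orderIsoUnitIntervalBirational y := this
  simp only [signedUnit]
  linarith

theorem signedUnit_zero : signedUnit 0 = -1 := by
  have : ENNReal.orderIsoUnitIntervalBirational 0 = ⊥ := map_bot _
  rw [signedUnit, this]
  change 2 * (0 : ℝ) - 1 = -1
  norm_num

theorem signedUnit_top : signedUnit ⊤ = 1 := by
  have : ENNReal.orderIsoUnitIntervalBirational ⊤ = ⊤ := map_top _
  rw [signedUnit, this]
  change 2 * (1 : ℝ) - 1 = 1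
  norm_num

theorem abs_signedUnit_le (z : ℝ≥0∞) : |signedUnit z| ≤ 1 := by
  have h := (ENNReal.orderIsoUnitIntervalBirational z).2
  rw [abs_le, signedUnit]
  constructor <;> linarith [h.1, h.2]

theorem exists_signedUnit_eq {x : ℝ} (hx : |x| ≤ 1) : ∃ z, signedUnit z = x := by
  rw [abs_le] at hx
  obtain ⟨z, hz⟩ := ENNReal.orderIsoUnitIntervalBirational.surjective
    ⟨(x + 1) / 2, by constructor <;> linarith⟩
  refine ⟨z, ?_⟩
  rw [signedUnit, hz]
  ring

theorem mem_staircaseMatrices_signedUnit_iff {l r : ℕ} {c : Fin l → Fin r → ℝ≥0∞} :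
    (fun p : Fin l × Fin r => signedUnit (c p.1 p.2)) ∈ staircaseMatrices l r 1 ↔
      IsSpeedArray c := by
  have h0 : ∀ z, signedUnit z = -1 ↔ z = 0 := fun z => by
    rw [← signedUnit_zero, signedUnit_strictMono.injective.eq_iff]
  have ht : ∀ z, signedUnit z = 1 ↔ z = ⊤ := fun z => by
    rw [← signedUnit_top, signedUnit_strictMono.injective.eq_iff]
  have h0' : ∀ z, -1 < signedUnit z ↔ z ≠ 0 := fun z => by
    rw [← signedUnit_zero, signedUnit_strictMono.lt_iff_lt, pos_iff_ne_zero]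
  have ht' : ∀ z, signedUnit z < 1 ↔ z ≠ ⊤ := fun z => by
    rw [← signedUnit_top, signedUnit_strictMono.lt_iff_lt, lt_top_iff_ne_top]
  constructor
  · rintro ⟨-, h1, h2⟩
    refine ⟨fun i i' j hi hc => (h0 _).1 (h1 i i' j hi ((ht' _).2 hc)),
      fun i j j' hj hc => (ht _).1 (h2 i j j' hj ((h0' _).2 hc))⟩
  · intro h
    exact ⟨fun p => abs_signedUnit_le _,
      fun i i' j hi hc => (h0 _).2 (h.row i i' j hi ((ht' _).1 hc)),
      fun i j j' hj hc => (ht _).2 (h.col i j j' hj ((h0' _).1 hc))⟩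

end

section
open Filter Topology
open scoped ENNReal

variable {n : ℕ} {piN : ↥(Cycl n) → ↥(Assoc n)} {S : Psi (n + 1)} {l r : ℕ} {a : Fin l → ℕ}
  {b : Fin r → ℕ} {x : ↥(Assoc n)}

/-- The index of the cyclohedron coordinate comparing the `i`-th left cluster with the `j`-th right
cluster. -/
def clusterIdx (hab : IsBoundaryEnum (n + 1) (natBrackets S) a b) (i : Fin l) (j : Fin r) :
    TripleIdx n :=
  have hS := isBracketSystem_natBrackets n.succ_pos S
  have ha := hS.lt _ (hab.left i).1
  have hb := hS.lt _ (hab.right j).1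
  have hlt : a i < b j := by
    have h1 := hS.compat _ (hab.left i).1 _ (hab.right j).1
    have h2 := (hab.left i).2
    have h3 := (hab.right j).2
    simp only at h1
    omega
  ⟨(0, ⟨a i, (hab.left i).2⟩, ⟨b j, hb⟩), fun h => ha.ne (congrArg Fin.val h),
    fun h => (hab.right j).2.ne (congrArg Fin.val h), fun h => hlt.ne (congrArg Fin.val h)⟩

theorem tendsToRatios_of_mem_fiber (hcont : Continuous piN)
    (hcomm : ∀ t (ht : t ∈ openSimplex n),
      piN ⟨betaMap n t, subset_closure (Set.mem_image_of_mem _ ht)⟩ =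
        ⟨alphaMap n t, subset_closure (Set.mem_image_of_mem _ ht)⟩)
    {y : ↥(Cycl n)} (hy : piN y = x) {H : Filter (Fin n → ℝ)} (hH : openSimplex n ∈ H)
    (hβ : Tendsto (betaMap n) H (𝓝 y.1)) :
    TendsToRatios (n + 1) (ratioNat x.1) H extNat :=
  tendsToRatios_extNat_iff.2 ⟨hH, hy ▸ tendsto_alphaMap_of_tendsto_betaMap hcont hcomm hH hβ⟩

theorem tendsto_betaMap_comap (y : ↥(Cycl n)) :
    Tendsto (betaMap n) (comap (betaMap n) (𝓝 y.1) ⊓ 𝓟 (openSimplex n)) (𝓝 y.1) :=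
  tendsto_comap.mono_left inf_le_left

theorem tendsto_sTilde_of_tendsto_betaMap {y : ↥(Cycl n)} {H : Filter (Fin n → ℝ)}
    (hβ : Tendsto (betaMap n) H (𝓝 y.1)) (q : TripleIdx n) :
    Tendsto (fun t => sTilde n t q) H (𝓝 (y.1.2 q)) :=
  tendsto_pi_nhds.1 ((continuous_snd.tendsto _).comp hβ) q

theorem ratioTendsto_of_mem_fiber (hcont : Continuous piN)
    (hcomm : ∀ t (ht : t ∈ openSimplex n),
      piN ⟨betaMap n t, subset_closure (Set.mem_image_of_mem _ ht)⟩ =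
        ⟨alphaMap n t, subset_closure (Set.mem_image_of_mem _ ht)⟩)
    (hx : x.1 ∈ openStratum n S) (hab : IsBoundaryEnum (n + 1) (natBrackets S) a b)
    {y : ↥(Cycl n)} (hy : piN y = x) {H : Filter (Fin n → ℝ)} (hH : openSimplex n ∈ H)
    (hβ : Tendsto (betaMap n) H (𝓝 y.1)) (i : Fin l) (j : Fin r) :
    RatioTendsto H (fun t => extNat t (a i)) (fun t => 1 - extNat t (b j))
      (y.1.2 (clusterIdx hab i j)) :=
  (tendsto_sTilde_iff (isStratumPoint_ratioNat hx)
    (tendsToRatios_of_mem_fiber hcont hcomm hy hH hβ) (q := clusterIdx hab i j) rfl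
    (hab.left i).1 (hab.right j).1).1 (tendsto_sTilde_of_tendsto_betaMap hβ _)

theorem isSpeedArray_of_mem_fiber (hcont : Continuous piN)
    (hcomm : ∀ t (ht : t ∈ openSimplex n),
      piN ⟨betaMap n t, subset_closure (Set.mem_image_of_mem _ ht)⟩ =
        ⟨alphaMap n t, subset_closure (Set.mem_image_of_mem _ ht)⟩)
    (hx : x.1 ∈ openStratum n S) (hab : IsBoundaryEnum (n + 1) (natBrackets S) a b)
    {y : ↥(Cycl n)} (hy : piN y = x) :
    IsSpeedArray fun i j => y.1.2 (clusterIdx hab i j) := by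
  have := neBot_comap_inf_of_mem_closure y.2
  have hH : openSimplex n ∈ comap (betaMap n) (𝓝 y.1) ⊓ 𝓟 (openSimplex n) :=
    mem_inf_of_right (mem_principal_self _)
  exact (tendsToRatios_of_mem_fiber hcont hcomm hy hH (tendsto_betaMap_comap y)).isSpeedArray
    (isBracketSystem_natBrackets n.succ_pos S) (isStratumPoint_ratioNat hx) extNat_zero
    extNat_last hab
    (ratioTendsto_of_mem_fiber hcont hcomm hx hab hy hH (tendsto_betaMap_comap y))

theorem eq_of_mem_fiber (hcont : Continuous piN)
    (hcomm : ∀ t (ht : t ∈ openSimplex n),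
      piN ⟨betaMap n t, subset_closure (Set.mem_image_of_mem _ ht)⟩ =
        ⟨alphaMap n t, subset_closure (Set.mem_image_of_mem _ ht)⟩)
    (hx : x.1 ∈ openStratum n S) (hab : IsBoundaryEnum (n + 1) (natBrackets S) a b)
    {y y' : ↥(Cycl n)} (hy : piN y = x) (hy' : piN y' = x)
    (hyy' : ∀ i j, y.1.2 (clusterIdx hab i j) = y'.1.2 (clusterIdx hab i j)) : y = y' := by
  have hne := neBot_comap_inf_of_mem_closure y.2
  have hne' := neBot_comap_inf_of_mem_closure y'.2
  have hβ := tendsto_betaMap_comap y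
  have hβ' := tendsto_betaMap_comap y'
  set H := comap (betaMap n) (𝓝 y.1) ⊓ 𝓟 (openSimplex n) with hHdef
  set H' := comap (betaMap n) (𝓝 y'.1) ⊓ 𝓟 (openSimplex n) with hHdef'
  have hH : openSimplex n ∈ H := mem_inf_of_right (mem_principal_self _)
  have hH' : openSimplex n ∈ H' := mem_inf_of_right (mem_principal_self _)
  have h := tendsToRatios_of_mem_fiber hcont hcomm hy hH hβ
  have h' := tendsToRatios_of_mem_fiber hcont hcomm hy' hH' hβ'
  have hsup : TendsToRatios (n + 1) (ratioNat x.1) (H ⊔ H') extNat :=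
    ⟨eventually_sup.2 ⟨h.lt, h'.lt⟩,
      fun hij hjk hk => (h.lim hij hjk hk).sup (h'.lim hij hjk hk)⟩
  refine Subtype.ext (Prod.ext (funext fun p => ?_) (funext fun q => ?_))
  · have key : ∀ {z : ↥(Cycl n)} {F : Filter (Fin n → ℝ)} [F.NeBot],
        Tendsto (betaMap n) F (𝓝 z.1) →
        TendsToRatios (n + 1) (ratioNat x.1) F extNat →
        z.1.1 p = ratioNat x.1 0 (p + 1) (n + 1) := by
      intro z F _ hz hF
      have h1 := hF.tendsto_left extNat_zero extNat_last (p := p + 1) (by omega) (by omega)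
      simp only [extNat_succ] at h1
      exact tendsto_nhds_unique (tendsto_pi_nhds.1 ((continuous_fst.tendsto _).comp hz) p) h1
    rw [key hβ h, key hβ' h']
  · obtain ⟨L, hL⟩ := hsup.hasRatioLim_sin_sub (isBracketSystem_natBrackets n.succ_pos S)
      (isStratumPoint_ratioNat hx) extNat_zero extNat_last
      (by
        intro a' b' ha' hb' h0a hab' hbN
        obtain ⟨i, rfl⟩ := (hab.mem_left a').1 ⟨ha', by omega⟩
        obtain ⟨j, rfl⟩ := (hab.mem_right b').1 ⟨hb', by omega⟩
        refine ⟨_, (ratioTendsto_of_mem_fiber hcont hcomm hx hab hy hH hβ i j).sup ?_⟩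
        rw [hyy' i j]
        exact ratioTendsto_of_mem_fiber hcont hcomm hx hab hy' hH' hβ' i j)
      q.1.1.2 q.1.2.1.2 q.1.2.2.2 (fun hh => q.2.1 (Fin.ext hh)) (fun hh => q.2.2.1 (Fin.ext hh))
      (fun hh => q.2.2.2 (Fin.ext hh))
    have hL' : Tendsto (fun t => sTilde n t q) (H ⊔ H') (𝓝 L) := by
      simp only [sTilde_eq]
      exact hL
    rw [tendsto_nhds_unique (tendsto_sTilde_of_tendsto_betaMap hβ q) (hL'.mono_left le_sup_left),
      tendsto_nhds_unique (tendsto_sTilde_of_tendsto_betaMap hβ' q)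
        (hL'.mono_left le_sup_right)]

theorem exists_mem_fiber_of_isSpeedArray (hcont : Continuous piN)
    (hcomm : ∀ t (ht : t ∈ openSimplex n),
      piN ⟨betaMap n t, subset_closure (Set.mem_image_of_mem _ ht)⟩ =
        ⟨alphaMap n t, subset_closure (Set.mem_image_of_mem _ ht)⟩)
    (hx : x.1 ∈ openStratum n S) (hab : IsBoundaryEnum (n + 1) (natBrackets S) a b)
    {c : Fin l → Fin r → ℝ≥0∞} (hc : IsSpeedArray c) :
    ∃ y : ↥(Cycl n), piN y = x ∧ ∀ i j, y.1.2 (clusterIdx hab i j) = c i j := by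
  have hS := isBracketSystem_natBrackets n.succ_pos S
  have hX := isStratumPoint_ratioNat hx
  have hne := neBot_comap_inf_of_mem_closure x.2
  set G := comap (alphaMap n) (𝓝 x.1) ⊓ 𝓟 (openSimplex n) with hG
  have h : TendsToRatios (n + 1) (ratioNat x.1) G extNat :=
    tendsToRatios_extNat_iff.2 ⟨mem_inf_of_right (mem_principal_self _),
      tendsto_comap.mono_left inf_le_left⟩
  obtain ⟨τ, hτ, hτ01, hτc⟩ := h.exists_of_isSpeedArray hS hX hab hc
  set f : (Fin n → ℝ) × ℝ → Fin n → ℝ := fun s p => τ s (p + 1) with hf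
  have hfτ : ∀ᶠ s in G ×ˢ 𝓝[>] 0, ∀ p, p ≤ n + 1 → τ s p = extNat (f s) p := by
    filter_upwards [hτ01] with s hs p hp
    rcases p.eq_zero_or_pos with rfl | hp0
    · rw [hs.1, extNat_zero]
    rcases hp.eq_or_lt with rfl | hp
    · rw [hs.2, extNat_last]
    · have := extNat_succ (f s) ⟨p - 1, by omega⟩
      simp only [hf, show p - 1 + 1 = p by omega] at this
      exact this.symm
  set H := map f (G ×ˢ 𝓝[>] 0) with hHdef
  have hH : TendsToRatios (n + 1) (ratioNat x.1) H extNat := by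
    refine ⟨?_, fun {i j k} hij hjk hk => ?_⟩
    · rw [hHdef, eventually_map]
      filter_upwards [hτ.lt, hfτ] with s hs hs' i k hik hk
      rw [← hs' i (by omega), ← hs' k hk]
      exact hs i k hik hk
    · rw [hHdef, tendsto_map'_iff]
      refine (hτ.lim hij hjk hk).congr' ?_
      filter_upwards [hfτ] with s hs'
      simp only [Function.comp_apply]
      rw [← hs' i (by omega), ← hs' j (by omega), ← hs' k hk]
  have hHc : ∀ i j, RatioTendsto H (fun t => extNat t (a i)) (fun t => 1 - extNat t (b j))
      (c i j) := by
    intro i j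
    rw [RatioTendsto, hHdef, tendsto_map'_iff]
    refine Tendsto.congr' ?_ (hτc i j)
    filter_upwards [hfτ] with s hs'
    simp only [Function.comp_apply]
    rw [← hs' _ (hab.left i).2.le, ← hs' _ (hS.lt _ (hab.right j).1).le]
  obtain ⟨hHΔ, hHα⟩ := tendsToRatios_extNat_iff.1 hH
  obtain ⟨y, hy, hcl⟩ := isCompact_Cycl n (f := map (betaMap n) H) (by
    rw [le_principal_iff, mem_map]
    filter_upwards [hHΔ] with t ht
    exact subset_closure (Set.mem_image_of_mem _ ht))
  have hne' : (H ⊓ comap (betaMap n) (𝓝 y)).NeBot :=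
    neBot_inf_comap_iff_map.2 (by rw [inf_comm]; exact hcl)
  have hβ : Tendsto (betaMap n) (H ⊓ comap (betaMap n) (𝓝 y)) (𝓝 y) :=
    tendsto_comap.mono_left inf_le_right
  have hα := tendsto_alphaMap_of_tendsto_betaMap hcont hcomm (y := ⟨y, hy⟩)
    (mem_inf_of_left hHΔ) hβ
  have hpi : piN ⟨y, hy⟩ = x :=
    Subtype.ext (tendsto_nhds_unique hα (hHα.mono_left inf_le_left))
  refine ⟨⟨y, hy⟩, hpi, fun i j => ?_⟩
  exact tendsto_nhds_unique (ratioTendsto_of_mem_fiber hcont hcomm hx hab hpi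
    (mem_inf_of_left hHΔ) hβ i j) (Tendsto.mono_left (hHc i j) inf_le_left)

end

/-- **Proposition 6.1(iii) + Lemma 3.2.** Let `π_n : Cycl_n → Assoc_n` be the (unique)
continuous projection with `π_n ∘ β_n = α_n`, and let `S ∈ Ψ([n+1])` have exactly `ℓ`
left-most nodes (brackets containing the minimal leaf `0`) and `r` right-most nodes
(brackets containing the maximal leaf `n+1`).  Then the preimage under `π_n` of every
point of the open stratum of `Assoc_n` corresponding to `S` is homeomorphic to the
geometric realization of the poset `X_{ℓ,r}`. -/
theorem fiber_of_projection_homeomorph_realization_XWord (n : ℕ) (hn : 1 ≤ n)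
    (piN : ↥(Cycl n) → ↥(Assoc n)) (hcont : Continuous piN)
    (hcomm : ∀ t (ht : t ∈ openSimplex n),
      piN ⟨betaMap n t, subset_closure (Set.mem_image_of_mem _ ht)⟩ =
        ⟨alphaMap n t, subset_closure (Set.mem_image_of_mem _ ht)⟩)
    (S : Psi (n + 1)) (l r : ℕ)
    (hl : (S.1.filter fun b => b.1.1 = 0).card = l)
    (hr : (S.1.filter fun b => b.1.2 = n + 1).card = r)
    (x : ↥(Assoc n)) (hx : x.1 ∈ openStratum n S) :
    Nonempty (↥(piN ⁻¹' {x}) ≃ₜ ↥(PosetRealization (XWord l r))) := by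
  obtain ⟨a, b, hab⟩ := exists_isBoundaryEnum S hl hr
  obtain ⟨e⟩ := nonempty_homeomorph_staircaseMatrices l r
  have : CompactSpace ↥(Cycl n) := isCompact_iff_compactSpace.1 (isCompact_Cycl n)
  have : CompactSpace ↥(piN ⁻¹' {x}) :=
    isCompact_iff_compactSpace.1 (isClosed_singleton.preimage hcont).isCompact
  let f : ↥(piN ⁻¹' {x}) → ↥(staircaseMatrices l r 1) := fun y =>
    ⟨fun p => signedUnit (y.1.1.2 (clusterIdx hab p.1 p.2)),
      (mem_staircaseMatrices_signedUnit_iff (c := fun i j => y.1.1.2 (clusterIdx hab i j))).2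
        (isSpeedArray_of_mem_fiber hcont hcomm hx hab y.2)⟩
  have hf : Continuous f := by
    refine Continuous.subtype_mk (continuous_pi fun p => continuous_signedUnit.comp ?_) _
    exact (continuous_apply _).comp
      (continuous_snd.comp (continuous_subtype_val.comp continuous_subtype_val))
  have hbij : Function.Bijective f := by
    constructor
    · intro y y' hyy'
      refine Subtype.ext (eq_of_mem_fiber hcont hcomm hx hab y.2 y'.2 fun i j => ?_)
      exact signedUnit_strictMono.injective (congrFun (congrArg Subtype.val hyy') (i, j))
    · rintro ⟨M, hM⟩
      have hex : ∀ i j, ∃ z, signedUnit z = M (i, j) :=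
        fun i j => exists_signedUnit_eq (hM.1 (i, j))
      choose c hc using hex
      have hMc : M = fun p : Fin l × Fin r => signedUnit (c p.1 p.2) :=
        funext fun p => (hc p.1 p.2).symm
      obtain ⟨y, hy, hyc⟩ := exists_mem_fiber_of_isSpeedArray hcont hcomm hx hab
        ((mem_staircaseMatrices_signedUnit_iff (c := c)).1 (hMc ▸ hM))
      refine ⟨⟨y, hy⟩, Subtype.ext (funext fun p => ?_)⟩
      change signedUnit (y.1.2 (clusterIdx hab p.1 p.2)) = M p
      rw [hyc, hc]
  exact ⟨(Continuous.homeoOfEquivCompactToT2 (f := Equiv.ofBijective f hbij) hf).trans e.symm⟩
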